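/- There is no algorithm (computable function on codes of 3CMs) that, given a 3CM M, decides whether the rule set R_M is bts; i.e., bts membership is undecidable within the concrete class C = {R_M : M a 3CM}. -/

import Mathlib

set_option maxHeartbeats 1000000
set_option synthInstance.maxHeartbeats 1000000
set_option synthInstance.maxSize 512

attribute [local instance] Classical.propDecidable

noncomputable section

/-! ### Terms and atoms -/

/-- Variables: ordinary variables `Sum.inl n`, or fresh variables `Sum.inr (c, k)`
introduced by the trigger with code `c` for the head variable with code `k`. -/
abbrev Var : Type := ℕ ⊕ (ℕ × ℕ)

/-- Terms: constants `Sum.inl c` or variables `Sum.inr v`. -/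
abbrev FTerm : Type := ℕ ⊕ Var

def ct (n : ℕ) : FTerm := Sum.inl n
def vt (n : ℕ) : FTerm := Sum.inr (Sum.inl n)

/-- An atom: a predicate name together with its list of arguments. -/
abbrev Atom : Type := ℕ × List FTerm

/-- Active domain: all terms occurring in an atom set. -/
def adom (J : Set Atom) : Set FTerm := {t | ∃ a ∈ J, t ∈ a.2}

def atomVarsF (a : Atom) : Finset Var := (a.2.filterMap Sum.getRight?).toFinset

def varsF (A : Finset Atom) : Finset Var := A.biUnion atomVarsF

def setVars (J : Set Atom) : Set Var := {v | ∃ a ∈ J, Sum.inr v ∈ a.2}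

/-! ### Substitutions and homomorphisms -/

abbrev Subst := Var → FTerm

def applyT (σ : Subst) : FTerm → FTerm
  | Sum.inl c => Sum.inl c
  | Sum.inr v => σ v

def applyA (σ : Subst) (a : Atom) : Atom := (a.1, a.2.map (applyT σ))

def IsHomOn (σ : Subst) (A B : Set Atom) : Prop := ∀ a ∈ A, applyA σ a ∈ B

def HomBetween (A B : Set Atom) : Prop := ∃ σ : Subst, IsHomOn σ A B

def IsRetraction (σ : Subst) (A B : Set Atom) : Prop :=
  IsHomOn σ A B ∧ ∀ v ∈ setVars A ∩ setVars B, σ v = Sum.inr v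

/-- Isomorphism of atom sets: a pair of mutually inverse homomorphisms. -/
def Isomorphic (A B : Set Atom) : Prop :=
  ∃ σ τ : Subst, IsHomOn σ A B ∧ IsHomOn τ B A ∧
    (∀ a ∈ A, applyA τ (applyA σ a) = a) ∧ (∀ b ∈ B, applyA σ (applyA τ b) = b)

/-! ### Rules -/

/-- A rule is a pair (body, head). Its existential variables are the head variables
not occurring in the body; its frontier the variables shared by body and head.
A rule is Datalog when every head variable occurs in the body. -/
abbrev Rule : Type := Finset Atom × Finset Atom

def frontierOf (R : Rule) : Finset Var := varsF R.1 ∩ varsF R.2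

def DatRules (Rset : Finset Rule) : Finset Rule := Rset.filter fun R => varsF R.2 ⊆ varsF R.1
def NDatRules (Rset : Finset Rule) : Finset Rule := Rset.filter fun R => ¬ varsF R.2 ⊆ varsF R.1

/-- Satisfaction of a rule in an atom set. -/
def SatisfiesRule (J : Set Atom) (R : Rule) : Prop :=
  ∀ σ : Subst, IsHomOn σ (R.1 : Set Atom) J →
    ∃ σ' : Subst, (∀ v ∈ varsF R.1, σ' v = σ v) ∧ IsHomOn σ' (R.2 : Set Atom) J

def IsModel (Rset : Finset Rule) (I J : Set Atom) : Prop :=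
  (∀ R ∈ Rset, SatisfiesRule J R) ∧ HomBetween I J

/-- BCQ entailment: every model of the KB satisfies the query. -/
def Entails (Rset : Finset Rule) (I q : Set Atom) : Prop :=
  ∀ J : Set Atom, IsModel Rset I J → HomBetween q J

def IsUniversalModel (Rset : Finset Rule) (I U : Set Atom) : Prop :=
  IsModel Rset I U ∧ ∀ J : Set Atom, IsModel Rset I J → HomBetween U J

/-! ### Triggers -/

structure Trigger where
  rule : Rule
  sub : Subst

/-- Injective code of a trigger (a trigger is determined by its rule and the
restriction of its substitution to the body variables). -/
def Trigger.code (t : Trigger) : ℕ :=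
  Encodable.encode (t.rule, (varsF t.rule.1).image fun v => (v, t.sub v))

/-- The canonical extension of the trigger substitution, mapping each existential
variable `z` to the fresh variable unique for `z` and the trigger. -/
def Trigger.extSub (t : Trigger) : Subst := fun v =>
  if v ∈ varsF t.rule.1 then t.sub v
  else Sum.inr (Sum.inr (t.code, Encodable.encode v))

def Trigger.out (t : Trigger) : Finset Atom := t.rule.2.image (applyA t.extSub)

def Trigger.isOn (t : Trigger) (J : Set Atom) : Prop := IsHomOn t.sub (t.rule.1 : Set Atom) J

/-! ### Chase variants, derivations, chase termination classes -/

inductive ChaseVariant : Type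
  | O | SO | R | E
deriving DecidableEq

def Applicable : ChaseVariant → Trigger → Set Atom → Prop
  | .O, t, J => ¬ ((t.out : Set Atom) ⊆ J)
  | .SO, t, J => ∀ t' : Trigger, t'.rule = t.rule → t'.isOn J →
      (∀ v ∈ frontierOf t.rule, t'.sub v = t.sub v) → ¬ ((t'.out : Set Atom) ⊆ J)
  | .R, t, J => ¬ ∃ σ : Subst, IsRetraction σ (J ∪ (t.out : Set Atom)) J
  | .E, t, J => ¬ ∃ σ : Subst, IsHomOn σ (J ∪ (t.out : Set Atom)) J

def instSeq (I : Set Atom) (steps : ℕ → Option Trigger) : ℕ → Set Atom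
  | 0 => I
  | n + 1 => instSeq I steps n ∪
      (match steps n with
        | none => (∅ : Set Atom)
        | some t => (t.out : Set Atom))

/-- A (possibly infinite) derivation from the knowledge base `⟨Rset, I⟩`. -/
structure Deriv (Rset : Finset Rule) (I : Set Atom) where
  steps : ℕ → Option Trigger
  prefix_closed : ∀ n, steps n = none → steps (n + 1) = none
  valid : ∀ n t, steps n = some t →
    t.rule ∈ Rset ∧ t.isOn (instSeq I steps n) ∧ ¬ ((t.out : Set Atom) ⊆ instSeq I steps n)

def Deriv.inst {Rset : Finset Rule} {I : Set Atom} (D : Deriv Rset I) (n : ℕ) :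
    Set Atom := instSeq I D.steps n

def Deriv.res {Rset : Finset Rule} {I : Set Atom} (D : Deriv Rset I) : Set Atom :=
  ⋃ n, D.inst n

def Deriv.Finite {Rset : Finset Rule} {I : Set Atom} (D : Deriv Rset I) : Prop :=
  ∃ n, D.steps n = none

def Deriv.IsX {Rset : Finset Rule} {I : Set Atom} (X : ChaseVariant)
    (D : Deriv Rset I) : Prop :=
  ∀ n t, D.steps n = some t → Applicable X t (D.inst n)

def Deriv.Fair {Rset : Finset Rule} {I : Set Atom} (X : ChaseVariant)
    (D : Deriv Rset I) : Prop :=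
  ∀ i, ∀ t : Trigger, t.rule ∈ Rset → t.isOn (D.inst i) → Applicable X t (D.inst i) →
    ∃ j, i < j ∧ ¬ Applicable X t (D.inst j)

/-- All-instance, all-derivation chase termination. -/
def CTall (X : ChaseVariant) (Rset : Finset Rule) : Prop :=
  ∀ I : Finset Atom, ∀ D : Deriv Rset (I : Set Atom), D.IsX X → D.Fair X → D.Finite

/-- All-instance, some-derivation chase termination. -/
def CTex (X : ChaseVariant) (Rset : Finset Rule) : Prop :=
  ∀ I : Finset Atom, ∃ D : Deriv Rset (I : Set Atom), D.IsX X ∧ D.Fair X ∧ D.Finite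

inductive CTQuant : Type
  | all | ex

def CT (X : ChaseVariant) : CTQuant → Finset Rule → Prop
  | .all => CTall X
  | .ex => CTex X

/-- The result of some fair `X`-derivation from `⟨Rset, J⟩`. -/
def ChX (X : ChaseVariant) (Rset : Finset Rule) (J : Set Atom) : Set Atom :=
  if h : ∃ D : Deriv Rset J, D.IsX X ∧ D.Fair X then h.choose.res else J

/-! ### Gaifman graph, treewidth, bts -/

def gaifmanAdj (J : Set Atom) (u v : FTerm) : Prop :=
  u ≠ v ∧ ∃ a ∈ J, u ∈ a.2 ∧ v ∈ a.2

/-- The (Gaifman graph of the) atom set `J` has treewidth at most `k`: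
there is a tree decomposition all of whose bags have size at most `k + 1`. -/
def TreewidthAtMost (J : Set Atom) (k : ℕ) : Prop :=
  ∃ (ι : Type) (T : SimpleGraph ι) (bag : ι → Finset FTerm),
    T.Connected ∧ T.IsAcyclic ∧
    (∀ v ∈ adom J, ∃ i, v ∈ bag i) ∧
    (∀ u v : FTerm, gaifmanAdj J u v → ∃ i, u ∈ bag i ∧ v ∈ bag i) ∧
    (∀ v : FTerm, (SimpleGraph.induce {i | v ∈ bag i} T).Preconnected) ∧
    (∀ i, (bag i).card ≤ k + 1)

/-- Bounded-treewidth sets: for every instance, some universal model of bounded treewidth. -/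
def IsBts (Rset : Finset Rule) : Prop :=
  ∀ I : Finset Atom, ∃ (k : ℕ) (U : Set Atom),
    IsUniversalModel Rset (I : Set Atom) U ∧ TreewidthAtMost U k

/-! ### Three-counter machines -/

/-- A three-counter machine: states `0, …, m − 1` (state `0` is initial, standing for `q₁`),
and a partial transition function given by a finite table. -/
structure TCM where
  m : ℕ
  hm : 0 < m
  δ : List ((ℕ × Bool × Bool) × (ℕ × Int × Int))
  keys_nodup : (δ.map Prod.fst).Nodup
  wf : ∀ e ∈ δ, e.1.1 < m ∧ e.2.1 < m ∧ e.2.2.1.natAbs ≤ 1 ∧ e.2.2.2.natAbs ≤ 1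

/-- A configuration: state, two counters, and the time counter. -/
abbrev Config : Type := ℕ × ℕ × ℕ × ℕ

def TCM.step (M : TCM) (q : ℕ) (b1 b2 : Bool) : Option (ℕ × Int × Int) :=
  (M.δ.find? fun e => decide (e.1 = (q, b1, b2))).map Prod.snd

def TCM.next (M : TCM) (C : Config) : Option Config :=
  match M.step C.1 (decide (C.2.1 ≠ 0)) (decide (C.2.2.1 ≠ 0)) with
  | none => none
  | some (q', d1, d2) =>
      some (q', ((C.2.1 : ℤ) + d1).toNat, ((C.2.2.1 : ℤ) + d2).toNat, C.2.2.2 + 1)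

def TCM.run (M : TCM) : ℕ → Option Config
  | 0 => some (0, 0, 0, 0)
  | n + 1 => (M.run n).bind M.next

/-- The machine halts: some reachable configuration has no successor. -/
def TCM.Halts (M : TCM) : Prop := ∃ n C, M.run n = some C ∧ M.next C = none

/-! ### Prime encoding of configurations -/

/-- The least prime strictly greater than `n` (computably). -/
def nextPrime (n : ℕ) : ℕ := Nat.find (Nat.exists_infinite_primes (n + 1))

/-- `prm i` is the `(i+1)`-st prime `p_{i+1}`, i.e. `prm 0 = 2`. -/
def prm : ℕ → ℕ
  | 0 => 2
  | k + 1 => nextPrime (prm k)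

/-- Encoding of a configuration as a natural number. -/
def TCM.enc (M : TCM) (C : Config) : ℕ :=
  prm C.1 * prm M.m ^ C.2.1 * prm (M.m + 1) ^ C.2.2.1 * prm (M.m + 2) ^ C.2.2.2

/-- `p = p₁ ⋯ p_{m+3}`. -/
def TCM.p (M : TCM) : ℕ := ∏ i ∈ Finset.range (M.m + 3), prm i

/-- Decode the state from a residue modulo `M.p`. -/
def TCM.stateOf (M : TCM) (i : ℕ) : Option ℕ :=
  (List.range M.m).find? fun s => decide (prm s ∣ i)

/-- The canonical pair `(q_i, r_i)` realizing the prime encoding of the transitions. -/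
def TCM.qr (M : TCM) (i : ℕ) : ℕ × ℕ :=
  match M.stateOf i with
  | none => (1, 1)
  | some s =>
      let b1 : Bool := decide (prm M.m ∣ i)
      let b2 : Bool := decide (prm (M.m + 1) ∣ i)
      match M.step s b1 b2 with
      | none => (1, 1)
      | some (s', d1, d2) =>
          let e1 : ℤ := if b1 then d1 else max d1 0
          let e2 : ℤ := if b2 then d2 else max d2 0
          let num : ℕ := prm s' * prm (M.m + 2) *
            (if e1 = 1 then prm M.m else 1) * (if e2 = 1 then prm (M.m + 1) else 1)
          let den : ℕ := prm s *
            (if e1 = -1 then prm M.m else 1) * (if e2 = -1 then prm (M.m + 1) else 1)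
          (num / Nat.gcd num den, den / Nat.gcd num den)

def TCM.qi (M : TCM) (i : ℕ) : ℕ := (M.qr i).1
def TCM.ri (M : TCM) (i : ℕ) : ℕ := (M.qr i).2

/-- `g(n) = q_{n mod p} · n / r_{n mod p}`. -/
def TCM.g (M : TCM) (n : ℕ) : ℕ := M.qi (n % M.p) * n / M.ri (n % M.p)

/-- `gᵏ(2)`. -/
def TCM.gIter (M : TCM) (k : ℕ) : ℕ := (M.g)^[k] 2

/-- `G = {gᵏ(2) : k ∈ ℕ}`. -/
def TCM.Gset (M : TCM) : Set ℕ := Set.range M.gIter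

/-! ### The rule set `R_M` -/

def pEnd : ℕ := 0
def pFlood : ℕ := 1
def pS0 : ℕ := 2
def pS : ℕ := 3
def pG : ℕ := 4
def pR (i : ℕ) : ℕ := 5 + 2 * i
def pT (i : ℕ) : ℕ := 6 + 2 * i

/-- `j`-th vertex of an `S`-path of length `n` from variable `a` to variable `b`
with fresh intermediate variables `base + 1, …, base + n − 1`. -/
def pathVar (a b base n j : ℕ) : FTerm :=
  if j = 0 then vt a else if j = n then vt b else vt (base + j)

/-- The atoms of `Sⁿ(x_a, x_b)`: an `S`-path of length `n`. -/
def spath (a b base n : ℕ) : Finset Atom :=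
  (Finset.range n).image fun j =>
    (pS, [pathVar a b base n j, pathVar a b base n (j + 1)])

/-- Rule (1): `S₀(x,y) → S(x,y)`. -/
def ruleS : Rule := ({(pS0, [vt 0, vt 1])}, {(pS, [vt 0, vt 1])})

/-- Rule (2): `R_i(x,y) ∧ S(y,z) → R_{i+1}(x,z)` (indices modulo `p`). -/
def ruleR (M : TCM) (i : ℕ) : Rule :=
  ({(pR i, [vt 0, vt 1]), (pS, [vt 1, vt 2])}, {(pR ((i + 1) % M.p), [vt 0, vt 2])})

/-- Rule (3): `T_i(x,y,z) ∧ S^{r_i}(y,y′) ∧ S^{q_i}(z,z′) → T_i(x,y′,z′)`. -/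
def ruleT (M : TCM) (i : ℕ) : Rule :=
  (({(pT i, [vt 0, vt 1, vt 2])} : Finset Atom) ∪ spath 1 3 10 (M.ri i) ∪
      spath 2 4 (11 + M.ri i) (M.qi i),
    {(pT i, [vt 0, vt 3, vt 4])})

/-- Rule (4): `S(x,y) → Flood(y)`. -/
def ruleFloodProp : Rule := ({(pS, [vt 0, vt 1])}, {(pFlood, [vt 1])})

/-- Rule (5): `End(x) → S(x,x)`. -/
def ruleSEnd : Rule := ({(pEnd, [vt 0])}, {(pS, [vt 0, vt 0])})

/-- Rule (6): `S²(x,y) → G(x,y)`. -/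
def ruleGInit : Rule := (spath 0 1 10 2, {(pG, [vt 0, vt 1])})

/-- Rule (7): `G(x,y) ∧ R_i(x,y) ∧ T_i(x,y,z) → G(x,z)`. -/
def ruleGStep (i : ℕ) : Rule :=
  ({(pG, [vt 0, vt 1]), (pR i, [vt 0, vt 1]), (pT i, [vt 0, vt 1, vt 2])},
    {(pG, [vt 0, vt 2])})

/-- Rule (8): `Flood(x) ∧ Flood(y) ∧ Flood(z) → G(x,y) ∧ ⋀_{j<p} (R_j(x,y) ∧ T_j(x,y,z))`. -/
def ruleFloodGen (M : TCM) : Rule :=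
  ({(pFlood, [vt 0]), (pFlood, [vt 1]), (pFlood, [vt 2])},
    ({(pG, [vt 0, vt 1])} : Finset Atom) ∪
      (Finset.range M.p).biUnion fun j =>
        {(pR j, [vt 0, vt 1]), (pT j, [vt 0, vt 1, vt 2])})

/-- Rule (9): `G(y,z) ∧ End(z) → ∃x (S₀(x,y) ∧ R₀(x,x) ∧ ⋀_{j<p} T_j(x,x,x))`. -/
def ruleEx (M : TCM) : Rule :=
  ({(pG, [vt 1, vt 2]), (pEnd, [vt 2])},
    ({(pS0, [vt 0, vt 1]), (pR 0, [vt 0, vt 0])} : Finset Atom) ∪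
      (Finset.range M.p).biUnion fun j => {(pT j, [vt 0, vt 0, vt 0])})

/-- The rule set `R_M`. -/
def RM (M : TCM) : Finset Rule :=
  ({ruleS, ruleFloodProp, ruleSEnd, ruleGInit, ruleFloodGen M, ruleEx M} : Finset Rule) ∪
    (Finset.range M.p).biUnion fun i => {ruleR M i, ruleT M i, ruleGStep i}

/-- The alternating Datalog/non-Datalog chase steps `Step^X_n`. -/
def StepX (X : ChaseVariant) (M : TCM) : ℕ → Set Atom → Set Atom
  | 0, I => ChX X (DatRules (RM M)) I
  | n + 1, I => ChX X (DatRules (RM M)) (ChX X (NDatRules (RM M)) (StepX X M n I))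

/-- The constant `w`, the "well of positivity". -/
def wC : FTerm := ct 0

/-- The instance `{End(w)}`. -/
def IE : Set Atom := {(pEnd, [wC])}

/-- Membership in the signature of `R_M` (predicate together with its arity). -/
def InSig (M : TCM) (a : Atom) : Prop :=
  ((a.1 = pEnd ∨ a.1 = pFlood) ∧ a.2.length = 1) ∨
  ((a.1 = pS0 ∨ a.1 = pS ∨ a.1 = pG ∨ ∃ i < M.p, a.1 = pR i) ∧ a.2.length = 2) ∨
  ((∃ i < M.p, a.1 = pT i) ∧ a.2.length = 3)

/-- The critical instance: all atoms `P(w, …, w)` over the signature of `R_M`. -/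
def Crit (M : TCM) : Set Atom := {a | InSig M a ∧ ∀ t ∈ a.2, t = wC}

/-- An `S`-path of length `k` from `s` to `t` in `J`. -/
def SPath (J : Set Atom) : ℕ → FTerm → FTerm → Prop
  | 0, s, t => s = t
  | k + 1, s, t => ∃ u, (pS, [s, u]) ∈ J ∧ SPath J k u t

/-- The restriction `J|_S`: atoms of `J` all of whose terms belong to `S`. -/
def restrictTo (J : Set Atom) (S : Set FTerm) : Set Atom := {a ∈ J | ∀ t ∈ a.2, t ∈ S}

/-- An explicit injective encoding of three-counter machines by natural numbers. -/
def encodeTCM (M : TCM) : ℕ := Encodable.encode (M.m, M.δ)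

/-! ### Cliques and tree decompositions -/

lemma sup_conv {ι : Type} {T : SimpleGraph ι} {S : Set ι}
    (hS : (SimpleGraph.induce S T).Preconnected) {a b : ι} (ha : a ∈ S) (hb : b ∈ S) :
    ∃ q : T.Walk a b, q.IsPath ∧ ∀ x ∈ q.support, x ∈ S := by
  obtain ⟨w⟩ := hS ⟨a, ha⟩ ⟨b, hb⟩
  let w' : T.Walk a b := w.map (SimpleGraph.Embedding.induce S).toHom
  refine ⟨w'.bypass, w'.bypass_isPath, fun x hx => ?_⟩
  have h1 : x ∈ w'.support := w'.support_bypass_subset_support hx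
  have key : ∀ {u v : S} (w : (SimpleGraph.induce S T).Walk u v),
      ∀ x ∈ (w.map (SimpleGraph.Embedding.induce S).toHom).support, x ∈ S := by
    intro u v w x hx
    rw [SimpleGraph.Walk.support_map, List.mem_map] at hx
    obtain ⟨y, _, rfl⟩ := hx
    exact y.2
  exact key w x h1

lemma gate_exists {ι : Type} {T : SimpleGraph ι} {S : Set ι} {r s : ι} (p : T.Walk r s)
    (hp : p.IsPath) (hs : s ∈ S) :
    ∃ t ∈ S, ∃ a : T.Walk r t, a.IsPath ∧ a.support ⊆ p.support ∧
      ∀ x ∈ a.support, x ∈ S → x = t := by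
  induction p with
  | nil => exact ⟨_, hs, .nil, by simp, by simp, by simp⟩
  | @cons u v w h p ih =>
    by_cases hu : u ∈ S
    · exact ⟨u, hu, .nil, by simp, by simp, by simp⟩
    · rw [SimpleGraph.Walk.cons_isPath_iff] at hp
      obtain ⟨t, ht, a, ha, hsub, hx⟩ := ih hp.1 hs
      refine ⟨t, ht, .cons h a, ?_, ?_, ?_⟩
      · rw [SimpleGraph.Walk.cons_isPath_iff]
        exact ⟨ha, fun h' => hp.2 (hsub h')⟩
      · simp only [SimpleGraph.Walk.support_cons]
        exact List.cons_subset_cons _ hsub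
      · intro x hxm hxS
        simp only [SimpleGraph.Walk.support_cons, List.mem_cons] at hxm
        rcases hxm with rfl | hxm
        · exact absurd hxS hu
        · exact hx x hxm hxS

lemma helly_tree {ι : Type} {T : SimpleGraph ι} (hc : T.Connected) (hac : T.IsAcyclic)
    {κ : Type} (A : Finset κ) (S : κ → Set ι) (hA : A.Nonempty)
    (hS : ∀ v ∈ A, (SimpleGraph.induce (S v) T).Preconnected)
    (hpair : ∀ v ∈ A, ∀ w ∈ A, ∃ j, j ∈ S v ∧ j ∈ S w) :
    ∃ i, ∀ v ∈ A, i ∈ S v := by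
  obtain ⟨r⟩ := hc.nonempty
  have hg : ∀ v : κ, ∃ t : ι, ∃ a : T.Walk r t, v ∈ A → (t ∈ S v ∧ a.IsPath ∧
      ∀ x ∈ a.support, x ∈ S v → x = t) := by
    intro v
    by_cases hv : v ∈ A
    · obtain ⟨j, hj, _⟩ := hpair v hv v hv
      obtain ⟨w⟩ := hc.preconnected r j
      obtain ⟨t, ht, a, ha, _, hx⟩ := gate_exists (S := S v) w.bypass w.bypass_isPath hj
      exact ⟨t, a, fun _ => ⟨ht, ha, hx⟩⟩
    · exact ⟨r, .nil, fun h => absurd h hv⟩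
  choose t a hta using hg
  obtain ⟨v, hv, hmax⟩ := A.exists_max_image (fun v => (a v).length) hA
  refine ⟨t v, fun w hw => ?_⟩
  obtain ⟨j, hjv, hjw⟩ := hpair v hv w hw
  have key : ∀ u ∈ A, j ∈ S u → ∃ q : T.Walk (t u) j, ((a u).append q).IsPath ∧
      ∀ x ∈ q.support, x ∈ S u := by
    intro u hu hj
    obtain ⟨h1, h2, h3⟩ := hta u hu
    obtain ⟨q, hq, hqS⟩ := sup_conv (hS u hu) h1 hj
    refine ⟨q, ?_, hqS⟩
    rw [SimpleGraph.Walk.isPath_def, SimpleGraph.Walk.support_append, List.nodup_append']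
    have hqn := (SimpleGraph.Walk.isPath_def _).1 hq
    refine ⟨(SimpleGraph.Walk.isPath_def _).1 h2, hqn.tail, ?_⟩
    intro x hx hx'
    have := h3 x hx (hqS x (List.mem_of_mem_tail hx'))
    subst this
    rw [← SimpleGraph.Walk.cons_tail_support] at hqn
    exact (List.nodup_cons.1 hqn).1 hx'
  obtain ⟨qv, hqv, _⟩ := key v hv hjv
  obtain ⟨qw, hqw, hqwS⟩ := key w hw hjw
  have e : (a v).append qv = (a w).append qw := by
    have := (hac.subsingleton_path _ _).elim ⟨_, hqv⟩ ⟨_, hqw⟩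
    exact congrArg Subtype.val this
  have h1 : ((a v).append qv).getVert (a v).length = t v := by
    rw [SimpleGraph.Walk.getVert_append]; simp
  have h2 := hmax w hw
  rw [e, SimpleGraph.Walk.getVert_append, if_neg (by simpa using h2)] at h1
  rw [← h1]
  exact hqwS _ (qw.getVert_mem_support _)

lemma tw_clique {J : Set Atom} {k : ℕ} (h : TreewidthAtMost J k) (x : ℕ → FTerm)
    (hinj : Function.Injective x) (hx : ∀ m n, ∃ a ∈ J, x m ∈ a.2 ∧ x n ∈ a.2) : False := by
  obtain ⟨ι, T, bag, hc, hac, h1, h2, h3, h4⟩ := h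
  obtain ⟨i, hi⟩ := helly_tree hc hac (Finset.range (k + 2)) (fun n => {i | x n ∈ bag i})
    ⟨0, by simp⟩ (fun v _ => h3 _) (fun v _ w _ => by
      obtain ⟨a, ha, hv, hw⟩ := hx v w
      by_cases e : x v = x w
      · obtain ⟨i, hi⟩ := h1 (x v) ⟨a, ha, hv⟩
        exact ⟨i, hi, by rw [← e]; exact hi⟩
      · obtain ⟨i, hi⟩ := h2 (x v) (x w) ⟨e, a, ha, hv, hw⟩
        exact ⟨i, hi⟩)
  have : (Finset.range (k + 2)).image x ⊆ bag i := by
    intro y hy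
    obtain ⟨n, hn, rfl⟩ := Finset.mem_image.1 hy
    exact hi n hn
  have := Finset.card_le_card this
  rw [Finset.card_image_of_injective _ hinj, Finset.card_range] at this
  have := h4 i
  omega

lemma tw_finite {J : Set Atom} (h : (adom J).Finite) : ∃ k, TreewidthAtMost J k := by
  refine ⟨h.toFinset.card, Unit, ⊥, fun _ => h.toFinset, ?_, ?_, ?_, ?_, ?_, ?_⟩
  · exact SimpleGraph.IsTree.of_subsingleton.1
  · exact SimpleGraph.isAcyclic_bot
  · intro v hv; exact ⟨(), by simpa using hv⟩
  · rintro u v ⟨_, a, ha, hu, hv⟩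
    exact ⟨(), by simpa using ⟨a, ha, hu⟩, by simpa using ⟨a, ha, hv⟩⟩
  · intro v a b
    rw [Subsingleton.elim a b]
  · intro i; simp

/-! ### Primes and the simulation of runs by `g` -/

lemma nextPrime_spec (n : ℕ) : n + 1 ≤ nextPrime n ∧ (nextPrime n).Prime := by
  unfold nextPrime
  exact Nat.find_spec (Nat.exists_infinite_primes (n + 1))

lemma prm_prime (i : ℕ) : (prm i).Prime := by
  cases i with
  | zero => exact Nat.prime_two
  | succ k => exact (nextPrime_spec _).2

lemma prm_strictMono : StrictMono prm :=
  strictMono_nat_of_lt_succ fun n => (nextPrime_spec (prm n)).1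

lemma prm_pos (i : ℕ) : 0 < prm i := (prm_prime i).pos

lemma prm_dvd_prm {i j : ℕ} : prm i ∣ prm j ↔ i = j := by
  rw [Nat.prime_dvd_prime_iff_eq (prm_prime i) (prm_prime j)]
  exact prm_strictMono.injective.eq_iff

lemma prm_dvd_pow {i j e : ℕ} : prm i ∣ prm j ^ e ↔ i = j ∧ e ≠ 0 := by
  constructor
  · intro h
    refine ⟨prm_dvd_prm.1 ((prm_prime i).dvd_of_dvd_pow h), ?_⟩
    rintro rfl
    exact (prm_prime i).one_lt.ne' (by simpa using h)
  · rintro ⟨rfl, h⟩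
    exact dvd_pow_self _ h

lemma TCM.p_pos (M : TCM) : 0 < M.p := Finset.prod_pos fun i _ => prm_pos i

lemma prm_dvd_mod (M : TCM) {i n : ℕ} (hi : i < M.m + 3) : prm i ∣ n % M.p ↔ prm i ∣ n :=
  Nat.dvd_mod_iff (Finset.dvd_prod_of_mem prm (Finset.mem_range.2 hi))

lemma prm_dvd_enc (M : TCM) (C : Config) (i : ℕ) : prm i ∣ M.enc C ↔
    i = C.1 ∨ (i = M.m ∧ C.2.1 ≠ 0) ∨ (i = M.m + 1 ∧ C.2.2.1 ≠ 0) ∨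
      (i = M.m + 2 ∧ C.2.2.2 ≠ 0) := by
  unfold TCM.enc
  rw [(prm_prime i).dvd_mul, (prm_prime i).dvd_mul, (prm_prime i).dvd_mul, prm_dvd_prm,
    prm_dvd_pow, prm_dvd_pow, prm_dvd_pow]
  tauto

lemma stateOf_enc (M : TCM) (C : Config) (h : C.1 < M.m) :
    M.stateOf (M.enc C % M.p) = some C.1 := by
  unfold TCM.stateOf
  have key : ∀ s < M.m, (prm s ∣ M.enc C % M.p ↔ s = C.1) := by
    intro s hs
    rw [prm_dvd_mod M (by omega), prm_dvd_enc]
    constructor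
    · rintro (h | h | h | h) <;> omega
    · intro h; exact Or.inl h
  have h2 : (List.range M.m).find? (fun s => decide (prm s ∣ M.enc C % M.p)) =
      (List.range M.m).find? (fun s => decide (s = C.1)) := by
    apply List.find?_congr
    intro s hs
    simp only [key s (List.mem_range.1 hs)]
  rw [h2]
  rw [List.find?_range_eq_some]
  simp [h]
  intro j hj; omega

lemma enc_pos (M : TCM) (C : Config) : 0 < M.enc C := by
  unfold TCM.enc
  have := prm_pos
  have h1 := fun i e => pow_pos (prm_pos i) e
  exact Nat.mul_pos (Nat.mul_pos (Nat.mul_pos (this _) (h1 _ _)) (h1 _ _)) (h1 _ _)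

lemma TCM.qi_ri_pos (M : TCM) (i : ℕ) : 0 < M.qi i ∧ 0 < M.ri i := by
  unfold TCM.qi TCM.ri TCM.qr
  cases M.stateOf i with
  | none => simp
  | some s =>
    dsimp only
    rcases M.step s _ _ with _ | ⟨s', d1, d2⟩
    · simp
    · dsimp only
      have h1 : ∀ (c : Prop) [Decidable c] i, 0 < if c then prm i else 1 := by
        intro c _ i; split_ifs
        · exact prm_pos i
        · exact one_pos
      constructor
      · apply Nat.div_gcd_pos_of_pos_left
        exact Nat.mul_pos (Nat.mul_pos (Nat.mul_pos (prm_pos _) (prm_pos _)) (h1 _ _)) (h1 _ _)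
      · apply Nat.div_gcd_pos_of_pos_right
        exact Nat.mul_pos (Nat.mul_pos (prm_pos _) (h1 _ _)) (h1 _ _)

/-- Arithmetic for one counter. -/
lemma counter_arith (P c : ℕ) (d : ℤ) (hd : d.natAbs ≤ 1) (e : ℤ)
    (he : e = if c ≠ 0 then d else max d 0) :
    (if e = 1 then P else 1) * P ^ c = (if e = -1 then P else 1) * P ^ ((c : ℤ) + d).toNat := by
  have : d = 0 ∨ d = 1 ∨ d = -1 := by omega
  cases c with
  | zero => rcases this with rfl | rfl | rfl <;> simp at he <;> subst he <;> simp
  | succ c =>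
    rcases this with rfl | rfl | rfl <;> simp at he <;> subst he
    · simp
    · have : ((↑(c + 1) : ℤ) + 1).toNat = c + 2 := by omega
      rw [this]; simp [pow_succ]; ring
    · have : ((↑(c + 1) : ℤ) + -1).toNat = c := by omega
      rw [this]; simp [pow_succ]; ring

lemma TCM.step_mem (M : TCM) {q b1 b2 q' d1 d2} (h : M.step q b1 b2 = some (q', d1, d2)) :
    q' < M.m ∧ d1.natAbs ≤ 1 ∧ d2.natAbs ≤ 1 := by
  unfold TCM.step at h
  rw [Option.map_eq_some_iff] at h
  obtain ⟨e, he, h2⟩ := h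
  have := M.wf e (List.mem_of_find?_eq_some he)
  rw [h2] at this
  exact this.2

lemma g_enc (M : TCM) (C : Config) (h : C.1 < M.m) :
    (M.next C = none → M.g (M.enc C) = M.enc C) ∧
    (∀ C', M.next C = some C' → M.g (M.enc C) = M.enc C') ∧
    M.ri (M.enc C % M.p) ∣ M.enc C := by
  have hs := stateOf_enc M C h
  have hb1 : decide (prm M.m ∣ M.enc C % M.p) = decide (C.2.1 ≠ 0) := by
    have : prm M.m ∣ M.enc C % M.p ↔ C.2.1 ≠ 0 := by
      rw [prm_dvd_mod M (by omega), prm_dvd_enc]; omega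
    simp only [this]
  have hb2 : decide (prm (M.m + 1) ∣ M.enc C % M.p) = decide (C.2.2.1 ≠ 0) := by
    have : prm (M.m + 1) ∣ M.enc C % M.p ↔ C.2.2.1 ≠ 0 := by
      rw [prm_dvd_mod M (by omega), prm_dvd_enc]; omega
    simp only [this]
  unfold TCM.g TCM.qi TCM.ri TCM.next TCM.qr
  rw [hs]
  dsimp only
  rw [hb1, hb2]
  rcases hst : M.step C.1 (decide (C.2.1 ≠ 0)) (decide (C.2.2.1 ≠ 0)) with _ | ⟨s', d1, d2⟩
  · simp
  · dsimp only
    obtain ⟨hs', hd1, hd2⟩ := M.step_mem hst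
    have a1 := counter_arith (prm M.m) C.2.1 d1 hd1 _ rfl
    have a2 := counter_arith (prm (M.m + 1)) C.2.2.1 d2 hd2 _ rfl
    simp only [decide_eq_true_eq]
    set e1 : ℤ := if C.2.1 ≠ 0 then d1 else max d1 0
    set e2 : ℤ := if C.2.2.1 ≠ 0 then d2 else max d2 0
    set num : ℕ := prm s' * prm (M.m + 2) *
            (if e1 = 1 then prm M.m else 1) * (if e2 = 1 then prm (M.m + 1) else 1) with hnum
    set den : ℕ := prm C.1 *
            (if e1 = -1 then prm M.m else 1) * (if e2 = -1 then prm (M.m + 1) else 1) with hden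
    set C' : Config := (s', ((C.2.1 : ℤ) + d1).toNat, ((C.2.2.1 : ℤ) + d2).toNat, C.2.2.2 + 1)
      with hC'
    have key : num * M.enc C = den * M.enc C' := by
      unfold TCM.enc
      rw [hnum, hden, hC']
      dsimp only
      calc _ = prm s' * prm (M.m + 2) * prm C.1 * prm (M.m + 2) ^ C.2.2.2 *
            ((if e1 = 1 then prm M.m else 1) * prm M.m ^ C.2.1) *
            ((if e2 = 1 then prm (M.m + 1) else 1) * prm (M.m + 1) ^ C.2.2.1) := by ring
        _ = _ := by rw [a1, a2]; ring
    have hden0 : 0 < den := by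
      have h1 : ∀ (c : Prop) [Decidable c] i, 0 < if c then prm i else 1 := by
        intro c _ i; split_ifs
        · exact prm_pos i
        · exact one_pos
      exact Nat.mul_pos (Nat.mul_pos (prm_pos _) (h1 _ _)) (h1 _ _)
    have hg : 0 < Nat.gcd num den := Nat.gcd_pos_of_pos_right _ hden0
    obtain ⟨n1, hn1⟩ := Nat.gcd_dvd_left num den
    obtain ⟨d1', hd1'⟩ := Nat.gcd_dvd_right num den
    have e1' : num / Nat.gcd num den = n1 := Nat.div_eq_of_eq_mul_right hg hn1
    have e2' : den / Nat.gcd num den = d1' := Nat.div_eq_of_eq_mul_right hg hd1'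
    have hd0 : 0 < d1' := by
      rcases Nat.eq_zero_or_pos d1' with h0 | h0
      · rw [h0] at hd1'; simp at hd1'; omega
      · exact h0
    have key2 : n1 * M.enc C = d1' * M.enc C' := by
      apply Nat.eq_of_mul_eq_mul_left hg
      calc Nat.gcd num den * (n1 * M.enc C) = Nat.gcd num den * n1 * M.enc C := by ring
        _ = num * M.enc C := by rw [← hn1]
        _ = den * M.enc C' := key
        _ = Nat.gcd num den * d1' * M.enc C' := by rw [← hd1']
        _ = _ := by ring
    have hcop : Nat.Coprime d1' n1 := by
      have := Nat.coprime_div_gcd_div_gcd hg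
      rw [e1', e2'] at this
      exact this.symm
    rw [e1', e2']
    refine ⟨by simp, ?_, ?_⟩
    · intro C'' h; simp only [Option.some.injEq] at h; rw [← h]
      exact Nat.div_eq_of_eq_mul_right hd0 key2
    · exact hcop.dvd_of_dvd_mul_left ⟨_, key2⟩

lemma run_lt (M : TCM) (n : ℕ) (C : Config) (h : M.run n = some C) :
    C.1 < M.m ∧ C.2.2.2 = n := by
  induction n generalizing C with
  | zero => simp only [TCM.run, Option.some.injEq] at h; subst h; exact ⟨M.hm, rfl⟩
  | succ n ih =>
    simp only [TCM.run, Option.bind_eq_some_iff] at h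
    obtain ⟨D, hD, hn⟩ := h
    have := ih D hD
    unfold TCM.next at hn
    rcases hst : M.step D.1 (decide (D.2.1 ≠ 0)) (decide (D.2.2.1 ≠ 0)) with _ | ⟨s', d1, d2⟩
    · rw [hst] at hn; simp at hn
    · rw [hst] at hn
      simp only [Option.some.injEq] at hn
      rw [← hn]
      exact ⟨(M.step_mem hst).1, by simp [this.2]⟩

lemma gIter_run (M : TCM) (n : ℕ) (C : Config) (h : M.run n = some C) :
    M.gIter n = M.enc C := by
  induction n generalizing C with
  | zero =>
    simp only [TCM.run, Option.some.injEq] at h; subst h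
    simp [TCM.gIter, TCM.enc, prm]
  | succ n ih =>
    simp only [TCM.run, Option.bind_eq_some_iff] at h
    obtain ⟨D, hD, hn⟩ := h
    unfold TCM.gIter
    rw [Function.iterate_succ_apply']
    have := ih D hD
    unfold TCM.gIter at this
    rw [this]
    exact (g_enc M D (run_lt M n D hD).1).2.1 C hn

lemma run_of_not_halts (M : TCM) (h : ¬ M.Halts) (n : ℕ) : ∃ C, M.run n = some C := by
  induction n with
  | zero => exact ⟨_, rfl⟩
  | succ n ih =>
    obtain ⟨C, hC⟩ := ih
    rcases hn : M.next C with _ | C'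
    · exact absurd ⟨n, C, hC, hn⟩ h
    · exact ⟨C', by simp [TCM.run, hC, hn]⟩

lemma halts_bounded (M : TCM) (h : M.Halts) : ∃ B, ∀ n ∈ M.Gset, n < B := by
  obtain ⟨n, C, hC, hn⟩ := h
  have hfix : ∀ k, M.gIter (n + k) = M.enc C := by
    intro k
    induction k with
    | zero => exact gIter_run M n C hC
    | succ k ih =>
      unfold TCM.gIter at ih ⊢
      rw [← add_assoc, Function.iterate_succ_apply', ih]
      exact (g_enc M C (run_lt M n C hC).1).1 hn
  refine ⟨(∑ i ∈ Finset.range (n + 1), M.gIter i) + 1, ?_⟩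
  rintro _ ⟨k, rfl⟩
  rw [Nat.lt_succ_iff]
  by_cases hk : k < n + 1
  · exact Finset.single_le_sum (f := M.gIter) (fun _ _ => Nat.zero_le _) (Finset.mem_range.2 hk)
  · obtain ⟨j, rfl⟩ := Nat.exists_eq_add_of_le (show n ≤ k by omega)
    rw [hfix j, ← hfix 0]
    exact Finset.single_le_sum (f := M.gIter) (fun _ _ => Nat.zero_le _)
      (Finset.mem_range.2 (by omega : n + 0 < n + 1))

lemma gIter_unbounded (M : TCM) (h : ¬ M.Halts) (n : ℕ) : n ≤ M.gIter n := by
  obtain ⟨C, hC⟩ := run_of_not_halts M h n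
  rw [gIter_run M n C hC]
  unfold TCM.enc
  rw [(run_lt M n C hC).2]
  have h1 : n < prm (M.m + 2) ^ n := Nat.lt_pow_self (prm_prime _).one_lt
  refine h1.le.trans (Nat.le_mul_of_pos_left _ ?_)
  exact Nat.mul_pos (Nat.mul_pos (prm_pos _) (pow_pos (prm_pos _) _)) (pow_pos (prm_pos _) _)

lemma ri_dvd_gIter (M : TCM) (h : ¬ M.Halts) (n : ℕ) :
    M.ri (M.gIter n % M.p) ∣ M.gIter n := by
  obtain ⟨C, hC⟩ := run_of_not_halts M h n
  rw [gIter_run M n C hC]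
  exact (g_enc M C (run_lt M n C hC).1).2.2

/-! ### Explicit form of satisfaction of `R_M` -/

lemma mem_varsF {A : Finset Atom} {v : Var} : v ∈ varsF A ↔ ∃ a ∈ A, Sum.inr v ∈ a.2 := by
  simp only [varsF, atomVarsF, Finset.mem_biUnion, List.mem_toFinset, List.mem_filterMap]
  constructor
  · rintro ⟨a, ha, t, ht, h⟩
    refine ⟨a, ha, ?_⟩
    rcases t with t | t
    · simp at h
    · simp at h; rw [← h]; exact ht
  · rintro ⟨a, ha, h⟩
    exact ⟨a, ha, _, h, rfl⟩

lemma applyA_congr {σ τ : Subst} {a : Atom} (h : ∀ v, Sum.inr v ∈ a.2 → σ v = τ v) :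
    applyA σ a = applyA τ a := by
  unfold applyA
  congr 1
  apply List.map_congr_left
  rintro (c | v) hv
  · rfl
  · exact h v hv

lemma sat_elim {J : Set Atom} {R : Rule} (h : SatisfiesRule J R) {σ : Subst}
    (hσ : IsHomOn σ (R.1 : Set Atom) J) (hv : ∀ v ∈ varsF R.2, v ∈ varsF R.1) :
    IsHomOn σ (R.2 : Set Atom) J := by
  obtain ⟨σ', h1, h2⟩ := h σ hσ
  intro a ha
  rw [← applyA_congr (σ := σ')]
  · exact h2 a ha
  · intro v hv'
    exact h1 v (hv v (mem_varsF.2 ⟨a, ha, hv'⟩))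

lemma sat_intro {J : Set Atom} {R : Rule} (h : ∀ σ : Subst, IsHomOn σ (R.1 : Set Atom) J →
    IsHomOn σ (R.2 : Set Atom) J) : SatisfiesRule J R :=
  fun σ hσ => ⟨σ, fun _ _ => rfl, h σ hσ⟩

lemma SPath_fun {J : Set Atom} {n : ℕ} {s t : FTerm} (h : SPath J n s t) :
    ∃ u : ℕ → FTerm, u 0 = s ∧ u n = t ∧ ∀ j < n, (pS, [u j, u (j + 1)]) ∈ J := by
  induction n generalizing s with
  | zero => exact ⟨fun _ => s, rfl, h, by simp⟩
  | succ n ih =>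
    obtain ⟨r, h1, h2⟩ := h
    obtain ⟨u, hu0, hun, hu⟩ := ih h2
    refine ⟨fun j => if j = 0 then s else u (j - 1), by simp, by simp [hun], ?_⟩
    intro j hj
    rcases j with _ | j
    · simpa [hu0] using h1
    · simpa using hu j (by omega)

lemma fun_SPath {J : Set Atom} (n : ℕ) (u : ℕ → FTerm)
    (h : ∀ j < n, (pS, [u j, u (j + 1)]) ∈ J) : SPath J n (u 0) (u n) := by
  induction n generalizing u with
  | zero => rfl
  | succ n ih =>
    refine ⟨u 1, h 0 (by omega), ?_⟩
    exact ih (fun j => u (j + 1)) (fun j hj => h (j + 1) (by omega))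

lemma spath_hom_elim {J : Set Atom} {σ : Subst} {a b base n : ℕ} (hn : 0 < n)
    (h : IsHomOn σ (spath a b base n : Set Atom) J) :
    SPath J n (σ (Sum.inl a)) (σ (Sum.inl b)) := by
  have := fun_SPath (J := J) n (fun j => applyT σ (pathVar a b base n j)) (by
    intro j hj
    exact h (pS, [pathVar a b base n j, pathVar a b base n (j + 1)]) (by
      simp only [spath, Finset.coe_image, Set.mem_image, Finset.coe_range]
      exact ⟨j, hj, rfl⟩))
  simpa [pathVar, hn.ne', applyT, vt] using this

lemma spath_hom_intro {J : Set Atom} {σ : Subst} {a b base n : ℕ} {u : ℕ → FTerm}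
    (h0 : σ (Sum.inl a) = u 0) (h1 : σ (Sum.inl b) = u n)
    (h2 : ∀ j, 0 < j → j < n → σ (Sum.inl (base + j)) = u j)
    (h : ∀ j < n, (pS, [u j, u (j + 1)]) ∈ J) :
    IsHomOn σ (spath a b base n : Set Atom) J := by
  intro x hx
  simp only [spath, Finset.coe_image, Set.mem_image, Finset.coe_range] at hx
  obtain ⟨j, hj, rfl⟩ := hx
  have key : ∀ j ≤ n, applyT σ (pathVar a b base n j) = u j := by
    intro j hj
    unfold pathVar
    split_ifs with e1 e2
    · rw [e1]; exact h0
    · rw [e2]; exact h1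
    · exact h2 j (by omega) (by omega)
  have hj' : j < n := hj
  have : applyA σ (pS, [pathVar a b base n j, pathVar a b base n (j + 1)]) =
      (pS, [u j, u (j + 1)]) := by
    simp [applyA, key j hj'.le, key (j + 1) hj']
  rw [this]
  exact h j hj

lemma spath_vars {a b base n : ℕ} (hn : 0 < n) :
    Sum.inl a ∈ varsF (spath a b base n) ∧ Sum.inl b ∈ varsF (spath a b base n) := by
  constructor
  · refine mem_varsF.2 ⟨_, Finset.mem_image.2 ⟨0, by simpa using hn, rfl⟩, ?_⟩
    simp [pathVar, vt]
  · refine mem_varsF.2 ⟨_, Finset.mem_image.2 ⟨n - 1, by simpa using hn, rfl⟩, ?_⟩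
    have : n - 1 + 1 = n := by omega
    simp [pathVar, vt, this, hn.ne']

/-- Closure of an atom set under the rules of `R_M`, in explicit form. -/
structure Cl (M : TCM) (J : Set Atom) : Prop where
  r1 : ∀ x y, (pS0, [x, y]) ∈ J → (pS, [x, y]) ∈ J
  r2 : ∀ i < M.p, ∀ x y z, (pR i, [x, y]) ∈ J → (pS, [y, z]) ∈ J →
    (pR ((i + 1) % M.p), [x, z]) ∈ J
  r3 : ∀ i < M.p, ∀ x y z y' z', (pT i, [x, y, z]) ∈ J → SPath J (M.ri i) y y' →
    SPath J (M.qi i) z z' → (pT i, [x, y', z']) ∈ J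
  r4 : ∀ x y, (pS, [x, y]) ∈ J → (pFlood, [y]) ∈ J
  r5 : ∀ x, (pEnd, [x]) ∈ J → (pS, [x, x]) ∈ J
  r6 : ∀ x u y, (pS, [x, u]) ∈ J → (pS, [u, y]) ∈ J → (pG, [x, y]) ∈ J
  r7 : ∀ i < M.p, ∀ x y z, (pG, [x, y]) ∈ J → (pR i, [x, y]) ∈ J → (pT i, [x, y, z]) ∈ J →
    (pG, [x, z]) ∈ J
  r8 : ∀ x y z, (pFlood, [x]) ∈ J → (pFlood, [y]) ∈ J → (pFlood, [z]) ∈ J →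
    (pG, [x, y]) ∈ J ∧ ∀ j < M.p, (pR j, [x, y]) ∈ J ∧ (pT j, [x, y, z]) ∈ J
  r9 : ∀ y z, (pG, [y, z]) ∈ J → (pEnd, [z]) ∈ J →
    ∃ x, (pS0, [x, y]) ∈ J ∧ (pR 0, [x, x]) ∈ J ∧ ∀ j < M.p, (pT j, [x, x, x]) ∈ J

/-- Substitution sending the variables `0, 1, 2` to given terms. -/
def sub3 (x y z : FTerm) : Subst
  | Sum.inl 0 => x
  | Sum.inl 1 => y
  | Sum.inl _ => z
  | Sum.inr _ => z

lemma mem_RM {M : TCM} {R : Rule} : R ∈ RM M ↔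
    (R = ruleS ∨ R = ruleFloodProp ∨ R = ruleSEnd ∨ R = ruleGInit ∨
      R = ruleFloodGen M ∨ R = ruleEx M) ∨
    ∃ i < M.p, R = ruleR M i ∨ R = ruleT M i ∨ R = ruleGStep i := by
  simp only [RM, Finset.mem_union, Finset.mem_insert, Finset.mem_singleton,
    Finset.mem_biUnion, Finset.mem_range]

lemma cl_of_sat {M : TCM} {J : Set Atom} (h : ∀ R ∈ RM M, SatisfiesRule J R) : Cl M J := by
  have hbase : ∀ R, (R = ruleS ∨ R = ruleFloodProp ∨ R = ruleSEnd ∨ R = ruleGInit ∨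
      R = ruleFloodGen M ∨ R = ruleEx M) → SatisfiesRule J R :=
    fun R hR => h R (mem_RM.2 (Or.inl hR))
  have hidx : ∀ i < M.p, ∀ R, (R = ruleR M i ∨ R = ruleT M i ∨ R = ruleGStep i) →
      SatisfiesRule J R := fun i hi R hR => h R (mem_RM.2 (Or.inr ⟨i, hi, hR⟩))
  constructor
  · intro x y h1
    refine sat_elim (hbase ruleS (by tauto)) (σ := sub3 x y y) ?_ ?_ (pS, [vt 0, vt 1]) ?_
    · intro a ha
      simp only [ruleS, Finset.coe_singleton, Set.mem_singleton_iff] at ha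
      subst ha; exact h1
    · intro v; simp [mem_varsF, ruleS]
    · simp [ruleS]
  · intro i hi x y z h1 h2
    refine sat_elim (hidx i hi (ruleR M i) (by tauto)) (σ := sub3 x y z) ?_ ?_
      (pR ((i + 1) % M.p), [vt 0, vt 2]) ?_
    · intro a ha
      simp only [ruleR, Finset.coe_insert, Finset.coe_singleton, Set.mem_insert_iff,
        Set.mem_singleton_iff] at ha
      rcases ha with rfl | rfl
      · exact h1
      · exact h2
    · intro v; simp [mem_varsF, ruleR]; tauto
    · simp [ruleR]
  · intro i hi x y z y' z' h1 h2 h3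
    obtain ⟨u, u0, un, hu⟩ := SPath_fun h2
    obtain ⟨w, w0, wn, hw⟩ := SPath_fun h3
    let σ : Subst := fun v => match v with
      | Sum.inl 0 => x
      | Sum.inl 1 => y
      | Sum.inl 2 => z
      | Sum.inl 3 => y'
      | Sum.inl 4 => z'
      | Sum.inl k => if k < 11 + M.ri i then u (k - 10) else w (k - (11 + M.ri i))
      | Sum.inr _ => x
    have hσ : ∀ k ≥ 5, σ (Sum.inl k) =
        if k < 11 + M.ri i then u (k - 10) else w (k - (11 + M.ri i)) := by
      intro k hk
      obtain ⟨k, rfl⟩ := Nat.exists_eq_add_of_le' hk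
      rfl
    obtain ⟨hq, hr⟩ := M.qi_ri_pos i
    refine sat_elim (hidx i hi (ruleT M i) (by tauto)) (σ := σ) ?_ ?_
      (pT i, [vt 0, vt 3, vt 4]) ?_
    · intro a ha
      simp only [ruleT, Finset.coe_union, Finset.coe_singleton, Set.mem_union,
        Set.mem_singleton_iff] at ha
      rcases ha with (rfl | ha) | ha
      · exact h1
      · refine spath_hom_intro (u := u) ?_ ?_ ?_ hu a ha
        · exact u0.symm
        · exact un.symm
        · intro j h0 hj
          rw [hσ _ (by omega), if_pos (by omega)]
          congr 1; omega
      · refine spath_hom_intro (u := w) ?_ ?_ ?_ hw a ha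
        · exact w0.symm
        · exact wn.symm
        · intro j h0 hj
          rw [hσ _ (by omega), if_neg (by omega)]
          congr 1; omega
    · intro v hv
      obtain ⟨a, ha, hv⟩ := mem_varsF.1 hv
      simp only [ruleT, Finset.mem_singleton] at ha
      subst ha
      simp only [vt, List.mem_cons, Sum.inr.injEq, List.not_mem_nil, or_false] at hv
      have e1 := (spath_vars (a := 1) (b := 3) (base := 10) hr).2
      have e2 := (spath_vars (a := 2) (b := 4) (base := 11 + M.ri i) hq).2
      rw [mem_varsF] at e1 e2 ⊢
      simp only [ruleT, Finset.mem_union, Finset.mem_singleton]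
      rcases hv with rfl | rfl | rfl
      · exact ⟨_, Or.inl (Or.inl rfl), by simp [vt]⟩
      · obtain ⟨a, ha, h⟩ := e1
        exact ⟨a, Or.inl (Or.inr ha), h⟩
      · obtain ⟨a, ha, h⟩ := e2
        exact ⟨a, Or.inr ha, h⟩
    · simp [ruleT]
  · intro x y h1
    refine sat_elim (hbase ruleFloodProp (by tauto)) (σ := sub3 x y y) ?_ ?_ (pFlood, [vt 1]) ?_
    · intro a ha
      simp only [ruleFloodProp, Finset.coe_singleton, Set.mem_singleton_iff] at ha
      subst ha; exact h1
    · intro v; simp +contextual [mem_varsF, ruleFloodProp]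
    · simp [ruleFloodProp]
  · intro x h1
    refine sat_elim (hbase ruleSEnd (by tauto)) (σ := sub3 x x x) ?_ ?_ (pS, [vt 0, vt 0]) ?_
    · intro a ha
      simp only [ruleSEnd, Finset.coe_singleton, Set.mem_singleton_iff] at ha
      subst ha; exact h1
    · intro v; simp +contextual [mem_varsF, ruleSEnd]
    · simp [ruleSEnd]
  · intro x m y h1 h2
    refine sat_elim (hbase ruleGInit (by tauto)) (σ := sub3 x y m) ?_ ?_ (pG, [vt 0, vt 1]) ?_
    · refine spath_hom_intro (u := fun j => if j = 0 then x else if j = 1 then m else y)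
        rfl rfl ?_ ?_
      · intro j h0 hj
        obtain rfl : j = 1 := by omega
        rfl
      · intro j hj
        obtain rfl | rfl : j = 0 ∨ j = 1 := by omega
        · exact h1
        · exact h2
    · intro v hv
      obtain ⟨a, ha, hv⟩ := mem_varsF.1 hv
      simp only [ruleGInit, Finset.mem_singleton] at ha
      subst ha
      simp only [vt, List.mem_cons, Sum.inr.injEq, List.not_mem_nil, or_false] at hv
      rcases hv with rfl | rfl
      · exact (spath_vars (by norm_num)).1
      · exact (spath_vars (by norm_num)).2
    · simp [ruleGInit]
  · intro i hi x y z h1 h2 h3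
    refine sat_elim (hidx i hi (ruleGStep i) (by tauto)) (σ := sub3 x y z) ?_ ?_
      (pG, [vt 0, vt 2]) ?_
    · intro a ha
      simp only [ruleGStep, Finset.coe_insert, Finset.coe_singleton, Set.mem_insert_iff,
        Set.mem_singleton_iff] at ha
      rcases ha with rfl | rfl | rfl
      · exact h1
      · exact h2
      · exact h3
    · intro v; simp [mem_varsF, ruleGStep]; tauto
    · simp [ruleGStep]
  · intro x y z h1 h2 h3
    have key := sat_elim (hbase (ruleFloodGen M) (by tauto)) (σ := sub3 x y z) (by
        intro a ha
        simp only [ruleFloodGen, Finset.coe_insert, Finset.coe_singleton, Set.mem_insert_iff,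
          Set.mem_singleton_iff] at ha
        rcases ha with rfl | rfl | rfl
        · exact h1
        · exact h2
        · exact h3) (by
        intro v hv
        obtain ⟨a, ha, hv⟩ := mem_varsF.1 hv
        rw [mem_varsF]
        simp only [ruleFloodGen, Finset.mem_union, Finset.mem_singleton, Finset.mem_biUnion,
          Finset.mem_insert] at ha ⊢
        have : Sum.inr v = vt 0 ∨ Sum.inr v = vt 1 ∨ Sum.inr v = vt 2 := by
          rcases ha with rfl | ⟨j, _, rfl | rfl⟩ <;> simp at hv <;> tauto
        rcases this with h | h | h
        · exact ⟨_, Or.inl rfl, by simp [h]⟩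
        · exact ⟨_, Or.inr (Or.inl rfl), by simp [h]⟩
        · exact ⟨_, Or.inr (Or.inr rfl), by simp [h]⟩)
    refine ⟨key (pG, [vt 0, vt 1]) (by simp [ruleFloodGen]), fun j hj => ⟨?_, ?_⟩⟩
    · refine key (pR j, [vt 0, vt 1]) ?_
      simp only [ruleFloodGen, Finset.coe_union, Set.mem_union, Finset.mem_coe,
        Finset.mem_biUnion, Finset.mem_insert]
      exact Or.inr ⟨j, Finset.mem_range.2 hj, Or.inl rfl⟩
    · refine key (pT j, [vt 0, vt 1, vt 2]) ?_
      simp only [ruleFloodGen, Finset.coe_union, Set.mem_union, Finset.mem_coe,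
        Finset.mem_biUnion, Finset.mem_insert, Finset.mem_singleton]
      exact Or.inr ⟨j, Finset.mem_range.2 hj, Or.inr rfl⟩
  · intro y z h1 h2
    obtain ⟨σ, hσ, hh⟩ := hbase (ruleEx M) (by tauto) (sub3 y y z) (by
      intro a ha
      simp only [ruleEx, Finset.coe_insert, Finset.coe_singleton, Set.mem_insert_iff,
        Set.mem_singleton_iff] at ha
      rcases ha with rfl | rfl
      · exact h1
      · exact h2)
    have e : σ (Sum.inl 1) = y := hσ (Sum.inl 1) (by simp [mem_varsF, ruleEx, vt])
    refine ⟨σ (Sum.inl 0), ?_, ?_, fun j hj => ?_⟩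
    · have := hh (pS0, [vt 0, vt 1]) (by simp [ruleEx])
      rw [← e]; exact this
    · exact hh (pR 0, [vt 0, vt 0]) (by simp [ruleEx])
    · refine hh (pT j, [vt 0, vt 0, vt 0]) ?_
      simp only [ruleEx, Finset.coe_union, Set.mem_union, Finset.mem_coe,
        Finset.mem_biUnion, Finset.mem_singleton]
      exact Or.inr ⟨j, Finset.mem_range.2 hj, rfl⟩

lemma sat_of_cl {M : TCM} {J : Set Atom} (h : Cl M J) : ∀ R ∈ RM M, SatisfiesRule J R := by
  intro R hR
  rw [mem_RM] at hR
  rcases hR with (rfl | rfl | rfl | rfl | rfl | rfl) | ⟨i, hi, rfl | rfl | rfl⟩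
  · refine sat_intro fun σ hσ a ha => ?_
    simp only [ruleS, Finset.coe_singleton, Set.mem_singleton_iff] at ha
    subst ha
    exact h.r1 _ _ (hσ (pS0, [vt 0, vt 1]) (by simp [ruleS]))
  · refine sat_intro fun σ hσ a ha => ?_
    simp only [ruleFloodProp, Finset.coe_singleton, Set.mem_singleton_iff] at ha
    subst ha
    exact h.r4 _ _ (hσ (pS, [vt 0, vt 1]) (by simp [ruleFloodProp]))
  · refine sat_intro fun σ hσ a ha => ?_
    simp only [ruleSEnd, Finset.coe_singleton, Set.mem_singleton_iff] at ha
    subst ha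
    exact h.r5 _ (hσ (pEnd, [vt 0]) (by simp [ruleSEnd]))
  · refine sat_intro fun σ hσ a ha => ?_
    simp only [ruleGInit, Finset.coe_singleton, Set.mem_singleton_iff] at ha
    subst ha
    obtain ⟨u, h1, v, h2, h3⟩ := spath_hom_elim (by norm_num) hσ
    have h3 : v = _ := h3
    subst h3
    exact h.r6 _ _ _ h1 h2
  · refine sat_intro fun σ hσ a ha => ?_
    obtain ⟨k1, k2⟩ := h.r8 _ _ _ (hσ (pFlood, [vt 0]) (by simp [ruleFloodGen]))
      (hσ (pFlood, [vt 1]) (by simp [ruleFloodGen])) (hσ (pFlood, [vt 2]) (by simp [ruleFloodGen]))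
    simp only [ruleFloodGen, Finset.coe_union, Set.mem_union, Finset.mem_coe, Finset.mem_biUnion,
      Finset.mem_insert, Finset.mem_singleton, Finset.mem_range] at ha
    rcases ha with rfl | ⟨j, hj, rfl | rfl⟩
    · exact k1
    · exact (k2 j hj).1
    · exact (k2 j hj).2
  · intro σ hσ
    obtain ⟨x, h1, h2, h3⟩ := h.r9 _ _ (hσ (pG, [vt 1, vt 2]) (by simp [ruleEx]))
      (hσ (pEnd, [vt 2]) (by simp [ruleEx]))
    refine ⟨Function.update σ (Sum.inl 0) x, ?_, ?_⟩
    · intro v hv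
      rw [Function.update_of_ne]
      rintro rfl
      simp [mem_varsF, ruleEx, vt] at hv
    · have e0 : Function.update σ (Sum.inl 0) x (Sum.inl 0) = x := by simp
      have e1 : Function.update σ (Sum.inl 0) x (Sum.inl 1) = σ (Sum.inl 1) := by simp
      intro a ha
      simp only [ruleEx, Finset.coe_union, Set.mem_union, Finset.mem_coe, Finset.mem_biUnion,
        Finset.mem_insert, Finset.mem_singleton, Finset.mem_range] at ha
      rcases ha with (rfl | rfl) | ⟨j, hj, rfl⟩
      · simp only [applyA, vt, List.map, applyT, e0, e1]; exact h1
      · simp only [applyA, vt, List.map, applyT, e0]; exact h2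
      · simp only [applyA, vt, List.map, applyT, e0]; exact h3 j hj
  · refine sat_intro fun σ hσ a ha => ?_
    simp only [ruleR, Finset.coe_singleton, Set.mem_singleton_iff] at ha
    subst ha
    exact h.r2 i hi _ _ _ (hσ (pR i, [vt 0, vt 1]) (by simp [ruleR]))
      (hσ (pS, [vt 1, vt 2]) (by simp [ruleR]))
  · refine sat_intro fun σ hσ a ha => ?_
    simp only [ruleT, Finset.coe_singleton, Set.mem_singleton_iff] at ha
    subst ha
    obtain ⟨hq, hr⟩ := M.qi_ri_pos i
    refine h.r3 i hi _ _ _ _ _ (hσ (pT i, [vt 0, vt 1, vt 2]) (by simp [ruleT]))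
      (spath_hom_elim hr (base := 10) fun a ha => hσ a ?_)
      (spath_hom_elim hq (base := 11 + M.ri i) fun a ha => hσ a ?_)
    · simp only [ruleT, Finset.coe_union, Set.mem_union]; exact Or.inl (Or.inr ha)
    · simp only [ruleT, Finset.coe_union, Set.mem_union]; exact Or.inr ha
  · refine sat_intro fun σ hσ a ha => ?_
    simp only [ruleGStep, Finset.coe_singleton, Set.mem_singleton_iff] at ha
    subst ha
    exact h.r7 i hi _ _ _ (hσ (pG, [vt 0, vt 1]) (by simp [ruleGStep]))
      (hσ (pR i, [vt 0, vt 1]) (by simp [ruleGStep]))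
      (hσ (pT i, [vt 0, vt 1, vt 2]) (by simp [ruleGStep]))

/-! ### Non-halting machines: not bts -/

lemma SPath_snoc {J : Set Atom} {n : ℕ} {s t u : FTerm} (h : SPath J n s t)
    (h' : (pS, [t, u]) ∈ J) : SPath J (n + 1) s u := by
  induction n generalizing s with
  | zero => have h : s = t := h; subst h; exact ⟨u, h', rfl⟩
  | succ n ih => obtain ⟨r, h1, h2⟩ := h; exact ⟨r, h1, ih h2⟩

/-- The terms of a simple infinite model. -/
def tt : ℕ → FTerm
  | 0 => wC
  | k + 1 => Sum.inr (Sum.inl k)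

lemma tt_inj : Function.Injective tt := by
  intro a b h
  rcases a with _ | a <;> rcases b with _ | b <;> simp [tt, wC, ct] at h ⊢
  exact h

/-- A simple infinite model of `⟨R_M, {End(w)}⟩`. -/
def JJ : Set Atom := {a | a = (pEnd, [wC]) ∨ (∃ k, a = (pS0, [tt (k + 1), tt k])) ∨
  (a.1 ≠ pEnd ∧ a.1 ≠ pS0 ∧ ∀ x ∈ a.2, x ∈ Set.range tt)}

lemma JJ_mem {a : Atom} (h : a ∈ JJ) : ∀ x ∈ a.2, x ∈ Set.range tt := by
  rcases h with rfl | ⟨k, rfl⟩ | h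
  · simp only [List.mem_singleton, forall_eq]; exact ⟨0, rfl⟩
  · intro x hx
    simp only [List.mem_cons, List.not_mem_nil, or_false] at hx
    rcases hx with rfl | rfl <;> exact ⟨_, rfl⟩
  · exact h.2.2

lemma pR_ne (i : ℕ) : pR i ≠ pEnd ∧ pR i ≠ pFlood ∧ pR i ≠ pS0 ∧ pR i ≠ pS ∧ pR i ≠ pG ∧
    ∀ j, pR i ≠ pT j := by
  simp only [pR, pT, pEnd, pFlood, pS0, pS, pG]
  refine ⟨?_, ?_, ?_, ?_, ?_, fun j => ?_⟩ <;> omega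

lemma pT_ne (i : ℕ) : pT i ≠ pEnd ∧ pT i ≠ pFlood ∧ pT i ≠ pS0 ∧ pT i ≠ pS ∧ pT i ≠ pG ∧
    ∀ j, pT i ≠ pR j := by
  simp only [pR, pT, pEnd, pFlood, pS0, pS, pG]
  refine ⟨?_, ?_, ?_, ?_, ?_, fun j => ?_⟩ <;> omega

lemma JJ_of {P : ℕ} {l : List FTerm} (h1 : P ≠ pEnd) (h2 : P ≠ pS0)
    (h : ∀ x ∈ l, x ∈ Set.range tt) : (P, l) ∈ JJ := Or.inr (Or.inr ⟨h1, h2, h⟩)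

lemma SPath_last {n : ℕ} {s t : FTerm} (h : SPath JJ n s t) (hs : s ∈ Set.range tt) :
    t ∈ Set.range tt := by
  induction n generalizing s with
  | zero => have h : s = t := h; subst h; exact hs
  | succ n ih =>
    obtain ⟨r, h1, h2⟩ := h
    exact ih h2 (JJ_mem h1 r (by simp))

lemma JJ_cl (M : TCM) : Cl M JJ := by
  have mS : pS ≠ pEnd ∧ pS ≠ pS0 := by simp [pS, pEnd, pS0]
  have mG : pG ≠ pEnd ∧ pG ≠ pS0 := by simp [pG, pEnd, pS0]
  have mF : pFlood ≠ pEnd ∧ pFlood ≠ pS0 := by simp [pFlood, pEnd, pS0]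
  constructor
  · intro x y h
    exact JJ_of mS.1 mS.2 (JJ_mem h)
  · intro i _ x y z h1 h2
    refine JJ_of (pR_ne _).1 (pR_ne _).2.2.1 ?_
    have := JJ_mem h1; have := JJ_mem h2
    simp_all
  · intro i _ x y z y' z' h1 h2 h3
    refine JJ_of (pT_ne _).1 (pT_ne _).2.2.1 ?_
    have h4 := JJ_mem h1
    have := SPath_last h2 (h4 y (by simp))
    have := SPath_last h3 (h4 z (by simp))
    simp_all
  · intro x y h
    refine JJ_of mF.1 mF.2 ?_
    have := JJ_mem h
    simp_all
  · intro x h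
    refine JJ_of mS.1 mS.2 ?_
    have := JJ_mem h
    simp_all
  · intro x u y h1 h2
    refine JJ_of mG.1 mG.2 ?_
    have := JJ_mem h1; have := JJ_mem h2
    simp_all
  · intro i _ x y z h1 h2 h3
    refine JJ_of mG.1 mG.2 ?_
    have := JJ_mem h1; have := JJ_mem h3
    simp_all
  · intro x y z h1 h2 h3
    have := JJ_mem h1; have := JJ_mem h2; have := JJ_mem h3
    refine ⟨JJ_of mG.1 mG.2 ?_, fun j _ => ⟨JJ_of (pR_ne _).1 (pR_ne _).2.2.1 ?_,
      JJ_of (pT_ne _).1 (pT_ne _).2.2.1 ?_⟩⟩ <;> simp_all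
  · intro y z h1 _
    obtain ⟨k, rfl⟩ := JJ_mem h1 y (by simp)
    have hk : ∀ x ∈ ([tt (k + 1)] : List FTerm), x ∈ Set.range tt := by simp
    refine ⟨tt (k + 1), Or.inr (Or.inl ⟨k, rfl⟩), JJ_of (pR_ne _).1 (pR_ne _).2.2.1 ?_,
      fun j _ => JJ_of (pT_ne _).1 (pT_ne _).2.2.1 ?_⟩ <;> simp

lemma JJ_S0 {x : FTerm} {k : ℕ} (h : (pS0, [x, tt k]) ∈ JJ) : x = tt (k + 1) := by
  rcases h with h | ⟨j, h⟩ | h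
  · simp [pS0, pEnd] at h
  · simp only [Prod.mk.injEq, List.cons.injEq, and_true, true_and] at h
    rw [tt_inj h.2]; exact h.1
  · exact absurd rfl h.2.1

/-- The property of a term `x` being a child of `y`. -/
def Child (M : TCM) (U : Set Atom) (x y : FTerm) : Prop :=
  (pS0, [x, y]) ∈ U ∧ (pR 0, [x, x]) ∈ U ∧ ∀ j < M.p, (pT j, [x, x, x]) ∈ U

/-- The chain of nulls above `w`. -/
def chn (M : TCM) (U : Set Atom) : ℕ → FTerm
  | 0 => wC
  | n + 1 => if h : ∃ x, Child M U x (chn M U n) then h.choose else wC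

lemma chn_G {M : TCM} (hM : ¬ M.Halts) {U : Set Atom} (hU : Cl M U) (hE : (pEnd, [wC]) ∈ U)
    (n : ℕ) (x : ℕ → FTerm) (h0 : x 0 = wC) (hx : ∀ k < n, Child M U (x (k + 1)) (x k)) :
    (pG, [x n, wC]) ∈ U := by
  have hww := hU.r5 _ hE
  rcases n with _ | n
  · rw [h0]; exact hU.r6 _ _ _ hww hww
  set N := n + 1 with hN
  have hS : ∀ a ≤ N, (pS, [x a, x (a - 1)]) ∈ U := by
    intro a ha
    rcases a with _ | a
    · simp only [h0]; exact hww
    · exact hU.r1 _ _ (hx a ha).1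
  have hC := hx n (by omega)
  have hpath : ∀ d a, a ≤ N → SPath U d (x a) (x (a - d)) := by
    intro d
    induction d with
    | zero => intro a _; rfl
    | succ d ih =>
      intro a ha
      refine ⟨x (a - 1), hS a ha, ?_⟩
      have := ih (a - 1) (by omega)
      rwa [show a - 1 - d = a - (d + 1) by omega] at this
  have hR : ∀ d, (pR (d % M.p), [x N, x (N - d)]) ∈ U := by
    intro d
    induction d with
    | zero => simpa using hC.2.1
    | succ d ih =>
      have := hU.r2 _ (Nat.mod_lt d M.p_pos) _ _ _ ih (hS (N - d) (by omega))
      rw [Nat.mod_add_mod] at this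
      rwa [show N - d - 1 = N - (d + 1) by omega] at this
  have hT : ∀ i < M.p, ∀ a, (pT i, [x N, x (N - a * M.ri i), x (N - a * M.qi i)]) ∈ U := by
    intro i hi a
    induction a with
    | zero => simpa using hC.2.2 i hi
    | succ a ih =>
      have := hU.r3 i hi _ _ _ _ _ ih (hpath (M.ri i) _ (by omega)) (hpath (M.qi i) _ (by omega))
      rwa [Nat.sub_sub, Nat.sub_sub, ← Nat.succ_mul, ← Nat.succ_mul] at this
  have hG : ∀ k, (pG, [x N, x (N - M.gIter k)]) ∈ U := by
    intro k
    induction k with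
    | zero => 
      have := hU.r6 _ _ _ (hS N le_rfl) (hS (N - 1) (by omega))
      rwa [Nat.sub_sub] at this
    | succ k ih =>
      obtain ⟨a, ha⟩ := ri_dvd_gIter M hM k
      set i := M.gIter k % M.p with hi
      have e1 : M.gIter k = a * M.ri i := by rw [ha, mul_comm]
      have e2 : M.gIter (k + 1) = a * M.qi i := by
        have : M.gIter (k + 1) = M.g (M.gIter k) := by
          unfold TCM.gIter; rw [Function.iterate_succ_apply']
        rw [this]
        unfold TCM.g
        rw [← hi]
        apply Nat.div_eq_of_eq_mul_left (M.qi_ri_pos i).2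
        rw [e1]; ring
      have hT' := hT i (Nat.mod_lt _ M.p_pos) a
      rw [← e1, ← e2] at hT'
      exact hU.r7 i (Nat.mod_lt _ M.p_pos) _ _ _ ih (hR _) hT'
  have := hG N
  rwa [Nat.sub_eq_zero_of_le (gIter_unbounded M hM N), h0] at this

lemma chn_child {M : TCM} (hM : ¬ M.Halts) {U : Set Atom} (hU : Cl M U) (hE : (pEnd, [wC]) ∈ U)
    (n : ℕ) : Child M U (chn M U (n + 1)) (chn M U n) := by
  induction n using Nat.strong_induction_on with
  | _ n ih =>
    have hG := chn_G hM hU hE n (chn M U) rfl ih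
    have h : ∃ x, Child M U x (chn M U n) := hU.r9 _ _ hG hE
    rw [chn, dif_pos h]
    exact h.choose_spec

lemma not_bts_of_not_halts {M : TCM} (hM : ¬ M.Halts) : ¬ IsBts (RM M) := by
  intro h
  obtain ⟨k, U, ⟨⟨hsat, σ, hσ⟩, huniv⟩, htw⟩ := h {(pEnd, [wC])}
  have hU := cl_of_sat hsat
  have hE : (pEnd, [wC]) ∈ U := hσ (pEnd, [wC]) (by simp)
  have hch := chn_child hM hU hE
  obtain ⟨τ, hτ⟩ := huniv JJ ⟨sat_of_cl (JJ_cl M), fun _ => wC, by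
    intro a ha
    simp only [Finset.coe_singleton, Set.mem_singleton_iff] at ha
    subst ha; exact Or.inl rfl⟩
  have himg : ∀ n, applyT τ (chn M U n) = tt n := by
    intro n
    induction n with
    | zero => rfl
    | succ n ih =>
      have := hτ _ (hch n).1
      simp only [applyA, List.map, ih] at this
      exact JJ_S0 this
  refine tw_clique htw (chn M U) ?_ ?_
  · intro a b hab
    apply tt_inj
    rw [← himg, ← himg, hab]
  · intro a b
    have hF : ∀ n, (pFlood, [chn M U n]) ∈ U := fun n => hU.r4 _ _ (hU.r1 _ _ (hch n).1)
    exact ⟨_, (hU.r8 _ _ _ (hF a) (hF b) (hF b)).1, by simp, by simp⟩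

/-! ### Halting machines: bts -/

/-- The null introduced above a term. -/
def ff : FTerm → FTerm
  | Sum.inr (Sum.inr (a, k)) => Sum.inr (Sum.inr (a, k + 1))
  | Sum.inr (Sum.inl n) => Sum.inr (Sum.inr (Encodable.encode (Sum.inr (Sum.inl n) : FTerm), 0))
  | Sum.inl c => Sum.inr (Sum.inr (Encodable.encode (Sum.inl c : FTerm), 0))

/-- The level of a term in its chain. -/
def lev : FTerm → ℕ
  | Sum.inr (Sum.inr (_, k)) => k + 1
  | _ => 0

lemma lev_ff (t : FTerm) : lev (ff t) = lev t + 1 := by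
  rcases t with c | n | ⟨a, k⟩ <;> rfl

/-- The (Skolem) chase. -/
inductive UU (M : TCM) (I : Set Atom) : Atom → Prop
  | base (a) : a ∈ I → UU M I a
  | r1 (x y) : UU M I (pS0, [x, y]) → UU M I (pS, [x, y])
  | r2 (i x y z) : i < M.p → UU M I (pR i, [x, y]) → UU M I (pS, [y, z]) →
      UU M I (pR ((i + 1) % M.p), [x, z])
  | r3 (i x) (u w : ℕ → FTerm) : i < M.p → UU M I (pT i, [x, u 0, w 0]) →
      (∀ j < M.ri i, UU M I (pS, [u j, u (j + 1)])) →
      (∀ j < M.qi i, UU M I (pS, [w j, w (j + 1)])) →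
      UU M I (pT i, [x, u (M.ri i), w (M.qi i)])
  | r4 (x y) : UU M I (pS, [x, y]) → UU M I (pFlood, [y])
  | r5 (x) : UU M I (pEnd, [x]) → UU M I (pS, [x, x])
  | r6 (x u y) : UU M I (pS, [x, u]) → UU M I (pS, [u, y]) → UU M I (pG, [x, y])
  | r7 (i x y z) : i < M.p → UU M I (pG, [x, y]) → UU M I (pR i, [x, y]) →
      UU M I (pT i, [x, y, z]) → UU M I (pG, [x, z])
  | r8a (x y z) : UU M I (pFlood, [x]) → UU M I (pFlood, [y]) → UU M I (pFlood, [z]) →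
      UU M I (pG, [x, y])
  | r8b (x y z j) : j < M.p → UU M I (pFlood, [x]) → UU M I (pFlood, [y]) →
      UU M I (pFlood, [z]) → UU M I (pR j, [x, y])
  | r8c (x y z j) : j < M.p → UU M I (pFlood, [x]) → UU M I (pFlood, [y]) →
      UU M I (pFlood, [z]) → UU M I (pT j, [x, y, z])
  | r9a (y z) : UU M I (pG, [y, z]) → UU M I (pEnd, [z]) → UU M I (pS0, [ff y, y])
  | r9b (y z) : UU M I (pG, [y, z]) → UU M I (pEnd, [z]) → UU M I (pR 0, [ff y, ff y])
  | r9c (y z j) : j < M.p → UU M I (pG, [y, z]) → UU M I (pEnd, [z]) →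
      UU M I (pT j, [ff y, ff y, ff y])

/-- The Skolem chase as a set of atoms. -/
def UUs (M : TCM) (I : Set Atom) : Set Atom := {a | UU M I a}

lemma UU_cl (M : TCM) (I : Set Atom) : Cl M (UUs M I) where
  r1 x y h := UU.r1 x y h
  r2 i hi x y z h1 h2 := UU.r2 i x y z hi h1 h2
  r3 i hi x y z y' z' h1 h2 h3 := by
    obtain ⟨u, rfl, rfl, hu⟩ := SPath_fun h2
    obtain ⟨w, rfl, rfl, hw⟩ := SPath_fun h3
    exact UU.r3 i x u w hi h1 hu hw
  r4 x y h := UU.r4 x y h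
  r5 x h := UU.r5 x h
  r6 x u y h1 h2 := UU.r6 x u y h1 h2
  r7 i hi x y z h1 h2 h3 := UU.r7 i x y z hi h1 h2 h3
  r8 x y z h1 h2 h3 := ⟨UU.r8a x y z h1 h2 h3,
    fun j hj => ⟨UU.r8b x y z j hj h1 h2 h3, UU.r8c x y z j hj h1 h2 h3⟩⟩
  r9 y z h1 h2 := ⟨ff y, UU.r9a y z h1 h2, UU.r9b y z h1 h2, fun j hj => UU.r9c y z j hj h1 h2⟩

/-- Child chosen in a model. -/
def chd (M : TCM) (J : Set Atom) (y : FTerm) : FTerm :=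
  if h : ∃ x, Child M J x y then h.choose else y

/-- The homomorphism from the chase to a model. -/
def hm (M : TCM) (J : Set Atom) (τ : Subst) : FTerm → FTerm
  | Sum.inl c => Sum.inl c
  | Sum.inr (Sum.inl n) => τ (Sum.inl n)
  | Sum.inr (Sum.inr (a, k)) =>
      (chd M J)^[k + 1] (applyT τ ((Encodable.decode (α := FTerm) a).getD wC))

lemma hm_ff (M : TCM) (J : Set Atom) (τ : Subst) (t : FTerm) :
    hm M J τ (ff t) = chd M J (hm M J τ t) := by
  rcases t with c | n | ⟨a, k⟩
  · simp only [ff, hm, Encodable.encodek]; rfl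
  · simp only [ff, hm, Encodable.encodek]; rfl
  · simp only [ff, hm]
    rw [Function.iterate_succ_apply']

lemma UU_univ {M : TCM} {I J : Set Atom} (hJ : Cl M J) {τ : Subst} (hτ : IsHomOn τ I J)
    (hI : ∀ t ∈ adom I, lev t = 0) : HomBetween (UUs M I) J := by
  set h := hm M J τ with hh
  have key : ∀ a, UU M I a → (a.1, a.2.map h) ∈ J := by
    have hchd : ∀ y z, (pG, [h y, h z]) ∈ J → (pEnd, [h z]) ∈ J → Child M J (h (ff y)) (h y) := by
      intro y z h1 h2
      have hex : ∃ x, Child M J x (h y) := hJ.r9 _ _ h1 h2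
      rw [hh, hm_ff, ← hh, chd, dif_pos hex]
      exact hex.choose_spec
    intro a ha
    induction ha with
    | base a ha =>
      have := hτ a ha
      have e : a.2.map h = a.2.map (applyT τ) := by
        apply List.map_congr_left
        intro t ht
        have := hI t ⟨a, ha, ht⟩
        rcases t with c | n | ⟨a, k⟩
        · rfl
        · rfl
        · simp [lev] at this
      rw [e]; exact this
    | r1 x y _ ih => exact hJ.r1 _ _ ih
    | r2 i x y z hi _ _ ih1 ih2 => exact hJ.r2 i hi _ _ _ ih1 ih2
    | r3 i x u w hi _ _ _ ih1 ih2 ih3 =>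
      exact hJ.r3 i hi _ _ _ _ _ ih1 (fun_SPath _ (fun j => h (u j)) ih2)
        (fun_SPath _ (fun j => h (w j)) ih3)
    | r4 x y _ ih => exact hJ.r4 _ _ ih
    | r5 x _ ih => exact hJ.r5 _ ih
    | r6 x u y _ _ ih1 ih2 => exact hJ.r6 _ _ _ ih1 ih2
    | r7 i x y z hi _ _ _ ih1 ih2 ih3 => exact hJ.r7 i hi _ _ _ ih1 ih2 ih3
    | r8a x y z _ _ _ ih1 ih2 ih3 => exact (hJ.r8 _ _ _ ih1 ih2 ih3).1
    | r8b x y z j hj _ _ _ ih1 ih2 ih3 => exact ((hJ.r8 _ _ _ ih1 ih2 ih3).2 j hj).1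
    | r8c x y z j hj _ _ _ ih1 ih2 ih3 => exact ((hJ.r8 _ _ _ ih1 ih2 ih3).2 j hj).2
    | r9a y z _ _ ih1 ih2 => exact (hchd y z ih1 ih2).1
    | r9b y z _ _ ih1 ih2 => exact (hchd y z ih1 ih2).2.1
    | r9c y z j hj _ _ ih1 ih2 => exact (hchd y z ih1 ih2).2.2 j hj
  refine ⟨fun v => h (Sum.inr v), fun a ha => ?_⟩
  have e : applyT (fun v => h (Sum.inr v)) = h := by
    funext t
    rcases t with c | v
    · rfl
    · rfl
  unfold applyA
  rw [e]
  exact key a ha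

/-- Terms in the chains above the instance, of bounded level. -/
def Dm (I : Set Atom) (K : ℕ) (t : FTerm) : Prop := lev t ≤ K ∧ ∃ c ∈ adom I, t = ff^[lev t] c

/-- The invariant of the chase for halting machines. -/
structure VI (M : TCM) (I : Set Atom) (K : ℕ) (a : Atom) : Prop where
  dm : ∀ t ∈ a.2, Dm I K t
  en : ∀ x, a = (pEnd, [x]) → lev x = 0
  s0 : ∀ x y, a = (pS0, [x, y]) → lev y = lev x - 1
  s : ∀ x y, a = (pS, [x, y]) → lev y = lev x - 1
  fl : ∀ x, a = (pFlood, [x]) → lev x < K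
  r : ∀ i < M.p, ∀ x y, a = (pR i, [x, y]) → lev x = K → ∃ n, lev y = K - n ∧ i = n % M.p
  t : ∀ i < M.p, ∀ x y z, a = (pT i, [x, y, z]) → lev x = K →
    ∃ b, lev y = K - b * M.ri i ∧ lev z = K - b * M.qi i
  g : ∀ x z, a = (pG, [x, z]) → lev x = K → ∃ n ∈ M.Gset, lev z = K - n

section
variable {M : TCM} {I : Set Atom} {K : ℕ}

lemma at_eq1 {P Q : ℕ} {x x' : FTerm} (e : ((P, [x]) : Atom) = (Q, [x'])) : P = Q ∧ x = x' := by
  injection e with e1 e2; injection e2 with e2 e3; exact ⟨e1, e2⟩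

lemma at_eq2 {P Q : ℕ} {x x' y y' : FTerm} (e : ((P, [x, y]) : Atom) = (Q, [x', y'])) :
    P = Q ∧ x = x' ∧ y = y' := by
  injection e with e1 e2; injection e2 with e2 e3; injection e3 with e3 e4; exact ⟨e1, e2, e3⟩

lemma at_eq3 {P Q : ℕ} {x x' y y' z z' : FTerm}
    (e : ((P, [x, y, z]) : Atom) = (Q, [x', y', z'])) : P = Q ∧ x = x' ∧ y = y' ∧ z = z' := by
  injection e with e1 e2; injection e2 with e2 e3; injection e3 with e3 e4
  injection e4 with e4 e5; exact ⟨e1, e2, e3, e4⟩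

lemma at_len {P Q : ℕ} {l l' : List FTerm} (e : ((P, l) : Atom) = (Q, l'))
    (h : l.length ≠ l'.length) : False := by
  injection e with e1 e2; exact h (by rw [e2])

lemma VI_S0 {x y : FTerm} (hx : Dm I K x) (hy : Dm I K y) (h : lev y = lev x - 1) :
    VI M I K (pS0, [x, y]) := by
  constructor
  · simp [hx, hy]
  · intro x' e
    exact (at_len e (by simp)).elim
  · intro x' y' e
    obtain ⟨-, rfl, rfl⟩ := at_eq2 e; exact h
  · intro x' y' e
    have := (at_eq2 e).1; simp only [pS0, pS, pEnd, pFlood, pG, pR, pT] at this; omega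
  · intro x' e
    exact (at_len e (by simp)).elim
  · intro i' _ x' y' e
    exfalso; have := (at_eq2 e).1; simp only [pS0, pS, pEnd, pFlood, pG, pR, pT] at this; omega
  · intro i' _ x' y' z' e
    exact (at_len e (by simp)).elim
  · intro x' z' e
    exfalso; have := (at_eq2 e).1; simp only [pS0, pS, pEnd, pFlood, pG, pR, pT] at this; omega

lemma VI_S {x y : FTerm} (hx : Dm I K x) (hy : Dm I K y) (h : lev y = lev x - 1) :
    VI M I K (pS, [x, y]) := by
  constructor
  · simp [hx, hy]
  · intro x' e
    exact (at_len e (by simp)).elim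
  · intro x' y' e
    have := (at_eq2 e).1; simp only [pS0, pS, pEnd, pFlood, pG, pR, pT] at this; omega
  · intro x' y' e
    obtain ⟨-, rfl, rfl⟩ := at_eq2 e; exact h
  · intro x' e
    exact (at_len e (by simp)).elim
  · intro i' _ x' y' e
    exfalso; have := (at_eq2 e).1; simp only [pS0, pS, pEnd, pFlood, pG, pR, pT] at this; omega
  · intro i' _ x' y' z' e
    exact (at_len e (by simp)).elim
  · intro x' z' e
    exfalso; have := (at_eq2 e).1; simp only [pS0, pS, pEnd, pFlood, pG, pR, pT] at this; omega

lemma VI_F {x : FTerm} (hx : Dm I K x) (h : lev x < K) :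
    VI M I K (pFlood, [x]) := by
  constructor
  · simp [hx]
  · intro x' e
    have := (at_eq1 e).1; simp only [pS0, pS, pEnd, pFlood, pG, pR, pT] at this; omega
  · intro x' y' e
    exact (at_len e (by simp)).elim
  · intro x' y' e
    exact (at_len e (by simp)).elim
  · intro x' e
    obtain ⟨-, rfl⟩ := at_eq1 e; exact h
  · intro i' _ x' y' e
    exact (at_len e (by simp)).elim
  · intro i' _ x' y' z' e
    exact (at_len e (by simp)).elim
  · intro x' z' e
    exact (at_len e (by simp)).elim

lemma VI_R {i : ℕ} {x y : FTerm} (hx : Dm I K x) (hy : Dm I K y)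
    (h : lev x = K → ∃ n, lev y = K - n ∧ i = n % M.p) :
    VI M I K (pR i, [x, y]) := by
  constructor
  · simp [hx, hy]
  · intro x' e
    exact (at_len e (by simp)).elim
  · intro x' y' e
    have := (at_eq2 e).1; simp only [pS0, pS, pEnd, pFlood, pG, pR, pT] at this; omega
  · intro x' y' e
    have := (at_eq2 e).1; simp only [pS0, pS, pEnd, pFlood, pG, pR, pT] at this; omega
  · intro x' e
    exact (at_len e (by simp)).elim
  · intro i' _ x' y' e h1
    obtain ⟨e0, rfl, rfl⟩ := at_eq2 e
    obtain rfl : i = i' := by simp only [pR] at e0; omega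
    exact h h1
  · intro i' _ x' y' z' e
    exact (at_len e (by simp)).elim
  · intro x' z' e
    exfalso; have := (at_eq2 e).1; simp only [pS0, pS, pEnd, pFlood, pG, pR, pT] at this; omega

lemma VI_T {i : ℕ} {x y z : FTerm} (hx : Dm I K x) (hy : Dm I K y) (hz : Dm I K z)
    (h : lev x = K → ∃ b, lev y = K - b * M.ri i ∧ lev z = K - b * M.qi i) :
    VI M I K (pT i, [x, y, z]) := by
  constructor
  · simp [hx, hy, hz]
  · intro x' e
    exact (at_len e (by simp)).elim
  · intro x' y' e
    exact (at_len e (by simp)).elim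
  · intro x' y' e
    exact (at_len e (by simp)).elim
  · intro x' e
    exact (at_len e (by simp)).elim
  · intro i' _ x' y' e
    exact (at_len e (by simp)).elim
  · intro i' _ x' y' z' e h1
    obtain ⟨e0, rfl, rfl, rfl⟩ := at_eq3 e
    obtain rfl : i = i' := by simp only [pT] at e0; omega
    exact h h1
  · intro x' z' e
    exact (at_len e (by simp)).elim

lemma VI_G {x y : FTerm} (hx : Dm I K x) (hy : Dm I K y)
    (h : lev x = K → ∃ n ∈ M.Gset, lev y = K - n) :
    VI M I K (pG, [x, y]) := by
  constructor
  · simp [hx, hy]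
  · intro x' e
    exact (at_len e (by simp)).elim
  · intro x' y' e
    have := (at_eq2 e).1; simp only [pS0, pS, pEnd, pFlood, pG, pR, pT] at this; omega
  · intro x' y' e
    have := (at_eq2 e).1; simp only [pS0, pS, pEnd, pFlood, pG, pR, pT] at this; omega
  · intro x' e
    exact (at_len e (by simp)).elim
  · intro i' _ x' y' e
    exfalso; have := (at_eq2 e).1; simp only [pS0, pS, pEnd, pFlood, pG, pR, pT] at this; omega
  · intro i' _ x' y' z' e
    exact (at_len e (by simp)).elim
  · intro x' z' e h1
    obtain ⟨-, rfl, rfl⟩ := at_eq2 e; exact h h1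

lemma UU_inv (hK : ∀ n ∈ M.Gset, n < K) (hI : ∀ t ∈ adom I, lev t = 0) (a : Atom)
    (ha : UU M I a) : VI M I K a := by
  have hK0 : 2 < K := hK 2 ⟨0, rfl⟩
  have hlev : ∀ (n : ℕ) (u : ℕ → FTerm), (∀ j < n, VI M I K (pS, [u j, u (j + 1)])) →
      lev (u n) = lev (u 0) - n ∧ (Dm I K (u 0) → Dm I K (u n)) := by
    intro n u
    induction n with
    | zero => intro _; exact ⟨rfl, id⟩
    | succ n ih =>
      intro h
      have h1 := ih fun j hj => h j (by omega)
      have h2 := h n (by omega)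
      have h3 := h2.s _ _ rfl
      exact ⟨by omega, fun _ => h2.dm _ (by simp)⟩
  have hff : ∀ y z, VI M I K (pG, [y, z]) → VI M I K (pEnd, [z]) → Dm I K (ff y) := by
    intro y z h1 h2
    obtain ⟨hl, c, hc, he⟩ := h1.dm y (by simp)
    refine ⟨?_, c, hc, ?_⟩
    · rw [lev_ff]
      by_contra hcon
      obtain ⟨n, hn, e⟩ := h1.g y z rfl (by omega)
      have := hK n hn
      have := h2.en z rfl
      omega
    · rw [lev_ff, Function.iterate_succ_apply', ← he]
  induction ha with
  | base a ha =>
    have hl : ∀ t ∈ a.2, lev t = 0 := fun t ht => hI t ⟨a, ha, ht⟩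
    constructor
    · intro t ht
      refine ⟨by rw [hl t ht]; omega, t, ⟨a, ha, ht⟩, by rw [hl t ht]; rfl⟩
    · rintro x rfl; exact hl x (by simp)
    · rintro x y rfl; rw [hl x (by simp), hl y (by simp)]
    · rintro x y rfl; rw [hl x (by simp), hl y (by simp)]
    · rintro x rfl; rw [hl x (by simp)]; omega
    · rintro i _ x y rfl h; rw [hl x (by simp)] at h; omega
    · rintro i _ x y z rfl h; rw [hl x (by simp)] at h; omega
    · rintro x z rfl h; rw [hl x (by simp)] at h; omega
  | r1 x y _ ih => exact VI_S (ih.dm _ (by simp)) (ih.dm _ (by simp)) (ih.s0 _ _ rfl)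
  | r2 i x y z hi _ _ ih1 ih2 =>
    refine VI_R (ih1.dm _ (by simp)) (ih2.dm _ (by simp)) fun h => ?_
    obtain ⟨n, h1, h2⟩ := ih1.r i hi _ _ rfl h
    have := ih2.s _ _ rfl
    refine ⟨n + 1, by omega, ?_⟩
    rw [h2, Nat.mod_add_mod]
  | r3 i x u w hi _ _ _ ih1 ih2 ih3 =>
    obtain ⟨u1, u2⟩ := hlev _ u ih2
    obtain ⟨w1, w2⟩ := hlev _ w ih3
    refine VI_T (ih1.dm _ (by simp)) (u2 (ih1.dm _ (by simp))) (w2 (ih1.dm _ (by simp)))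
      fun h => ?_
    obtain ⟨b, h1, h2⟩ := ih1.t i hi _ _ _ rfl h
    refine ⟨b + 1, ?_, ?_⟩
    · rw [u1, h1, Nat.sub_sub, Nat.succ_mul]
    · rw [w1, h2, Nat.sub_sub, Nat.succ_mul]
  | r4 x y _ ih =>
    have h := ih.s _ _ rfl
    have h2 := (ih.dm x (by simp)).1
    exact VI_F (ih.dm _ (by simp)) (by omega)
  | r5 x _ ih =>
    exact VI_S (ih.dm _ (by simp)) (ih.dm _ (by simp)) (by rw [ih.en _ rfl])
  | r6 x u y _ _ ih1 ih2 =>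
    refine VI_G (ih1.dm _ (by simp)) (ih2.dm _ (by simp)) fun h => ⟨2, ⟨0, rfl⟩, ?_⟩
    have := ih1.s _ _ rfl
    have := ih2.s _ _ rfl
    omega
  | r7 i x y z hi _ _ _ ih1 ih2 ih3 =>
    refine VI_G (ih1.dm _ (by simp)) (ih3.dm _ (by simp)) fun h => ?_
    obtain ⟨n, hn, e1⟩ := ih1.g _ _ rfl h
    obtain ⟨n', e2, e3⟩ := ih2.r i hi _ _ rfl h
    obtain ⟨b, e4, e5⟩ := ih3.t i hi _ _ _ rfl h
    have hnK := hK n hn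
    have : n' = n := by omega
    subst this
    have e6 : n' = b * M.ri i := by omega
    refine ⟨M.g n', ?_, ?_⟩
    · obtain ⟨k, rfl⟩ := hn
      exact ⟨k + 1, by unfold TCM.gIter; rw [Function.iterate_succ_apply']⟩
    · have : M.g n' = b * M.qi i := by
        unfold TCM.g
        rw [← e3]
        apply Nat.div_eq_of_eq_mul_left (M.qi_ri_pos i).2
        rw [e6]; ring
      rw [this, e5]
  | r8a x y z _ _ _ ih1 ih2 ih3 =>
    refine VI_G (ih1.dm _ (by simp)) (ih2.dm _ (by simp)) fun h => ?_
    have := ih1.fl _ rfl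
    omega
  | r8b x y z j hj _ _ _ ih1 ih2 ih3 =>
    refine VI_R (ih1.dm _ (by simp)) (ih2.dm _ (by simp)) fun h => ?_
    have := ih1.fl _ rfl
    omega
  | r8c x y z j hj _ _ _ ih1 ih2 ih3 =>
    refine VI_T (ih1.dm _ (by simp)) (ih2.dm _ (by simp)) (ih3.dm _ (by simp)) fun h => ?_
    have := ih1.fl _ rfl
    omega
  | r9a y z _ _ ih1 ih2 =>
    exact VI_S0 (hff y z ih1 ih2) (ih1.dm _ (by simp)) (by rw [lev_ff]; rfl)
  | r9b y z _ _ ih1 ih2 =>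
    exact VI_R (hff y z ih1 ih2) (hff y z ih1 ih2) fun h => ⟨0, by omega, by simp⟩
  | r9c y z j hj _ _ ih1 ih2 =>
    exact VI_T (hff y z ih1 ih2) (hff y z ih1 ih2) (hff y z ih1 ih2)
      fun h => ⟨0, by omega, by omega⟩
end

/-- Renaming all variables to ordinary ones. -/
def rho : Subst := fun v => Sum.inr (Sum.inl (Encodable.encode v))

/-- The inverse renaming. -/
def rhoInv : Subst
  | Sum.inl n => Sum.inr ((Encodable.decode (α := Var) n).getD (Sum.inl 0))
  | Sum.inr v => Sum.inr (Sum.inr v)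

lemma applyA_comp (σ τ : Subst) (a : Atom) :
    applyA σ (applyA τ a) = applyA (fun v => applyT σ (τ v)) a := by
  unfold applyA
  simp only [List.map_map]
  congr 1
  apply List.map_congr_left
  rintro (c | v) _ <;> rfl

lemma bts_of_halts {M : TCM} (hM : M.Halts) : IsBts (RM M) := by
  intro I
  obtain ⟨B, hB⟩ := halts_bounded M hM
  set I' : Set Atom := applyA rho '' (I : Set Atom) with hI'
  have hinv : ∀ a : Atom, applyA rhoInv (applyA rho a) = a := by
    intro a
    rw [applyA_comp]
    unfold applyA
    ext1
    · rfl
    · refine (List.map_congr_left ?_).trans (List.map_id _)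
      rintro (c | v) _
      · rfl
      · simp [applyT, rho, rhoInv]
  have hlev : ∀ t ∈ adom I', lev t = 0 := by
    rintro t ⟨a, ⟨b, _, rfl⟩, ht⟩
    simp only [applyA, List.mem_map] at ht
    obtain ⟨s, _, rfl⟩ := ht
    rcases s with c | v <;> rfl
  have hfinI : (adom I').Finite := by
    have h1 : I'.Finite := I.finite_toSet.image _
    have : adom I' = ⋃ a ∈ I', {t | t ∈ a.2} := by
      ext t; simp [adom]
    rw [this]
    exact h1.biUnion fun a _ => List.finite_toSet a.2
  have hfin : (adom (UUs M I')).Finite := by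
    refine (((hfinI.prod (Set.finite_Iic B))).image (fun q => ff^[q.2] q.1)).subset ?_
    rintro t ⟨a, ha, ht⟩
    obtain ⟨h1, c, hc, e⟩ := (UU_inv hB hlev a ha).dm t ht
    exact ⟨(c, lev t), ⟨hc, h1⟩, e.symm⟩
  obtain ⟨k, hk⟩ := tw_finite hfin
  refine ⟨k, UUs M I', ⟨⟨sat_of_cl (UU_cl M I'), rho, ?_⟩, ?_⟩, hk⟩
  · intro a ha
    exact UU.base _ ⟨a, ha, rfl⟩
  · rintro J ⟨hsat, τ, hτ⟩
    refine UU_univ (cl_of_sat hsat) (τ := fun v => applyT τ (rhoInv v)) ?_ hlev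
    rintro _ ⟨a, ha, rfl⟩
    rw [← applyA_comp, hinv]
    exact hτ a ha

lemma bts_iff_halts (M : TCM) : IsBts (RM M) ↔ M.Halts :=
  ⟨fun h => by_contra fun hn => not_bts_of_not_halts hn h, bts_of_halts⟩

/-! ### A small loop language, computing all primitive recursive functions -/

/-- Programs over registers: `loop r P` is `while r ≠ 0 do r := r - 1; P`. -/
inductive Prog : Type
  | skip : Prog
  | inc : ℕ → Prog
  | seq : Prog → Prog → Prog
  | loop : ℕ → Prog → Prog

/-- Forward big-step semantics. -/
inductive Ev : Prog → (ℕ → ℕ) → (ℕ → ℕ) → Prop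
  | skip (s) : Ev .skip s s
  | inc (r s) : Ev (.inc r) s (Function.update s r (s r + 1))
  | seq {P Q s s' s''} : Ev P s s' → Ev Q s' s'' → Ev (.seq P Q) s s''
  | loop_zero {r P s} : s r = 0 → Ev (.loop r P) s s
  | loop_succ {r P s s' s''} : s r ≠ 0 → Ev P (Function.update s r (s r - 1)) s' →
      Ev (.loop r P) s' s'' → Ev (.loop r P) s s''

lemma Ev.cast {P : Prog} {s s' t t' : ℕ → ℕ} (h : Ev P s s') (e : t = s) (e' : s' = t') :
    Ev P t t' := by subst e; subst e'; exact h

lemma ev_clear (r : ℕ) (s : ℕ → ℕ) : Ev (.loop r .skip) s (Function.update s r 0) := by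
  generalize hk : s r = k
  induction k generalizing s with
  | zero => exact (Ev.loop_zero hk).cast rfl (by rw [← hk]; simp)
  | succ k ih =>
    refine Ev.loop_succ (by omega) (Ev.skip _) ((ih _ ?_).cast rfl ?_)
    · simp [hk]
    · simp

lemma ev_move (a b : ℕ) (hab : a ≠ b) (s : ℕ → ℕ) :
    Ev (.loop a (.inc b)) s (Function.update (Function.update s b (s b + s a)) a 0) := by
  generalize hk : s a = k
  induction k generalizing s with
  | zero =>
    refine (Ev.loop_zero hk).cast rfl ?_
    funext x; simp only [Function.update_apply]; grind
  | succ k ih =>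
    refine Ev.loop_succ (by omega) (Ev.inc _ _) ((ih _ ?_).cast rfl ?_)
    · simp only [Function.update_apply]; grind
    · funext x; simp only [Function.update_apply]; grind

/-- Copy `a` to `b` with scratch register `t`. -/
def copyP (a b t : ℕ) : Prog := .seq (.loop a (.seq (.inc b) (.inc t))) (.loop t (.inc a))

lemma ev_copy (a b t : ℕ) (hab : a ≠ b) (hat : a ≠ t) (hbt : b ≠ t) (s : ℕ → ℕ) (ht : s t = 0) :
    Ev (copyP a b t) s (Function.update s b (s b + s a)) := by
  have h1 : ∀ k s, s a = k → Ev (.loop a (.seq (.inc b) (.inc t))) s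
      (Function.update (Function.update (Function.update s b (s b + k)) t (s t + k)) a 0) := by
    intro k
    induction k with
    | zero =>
      intro s hk
      refine (Ev.loop_zero hk).cast rfl ?_
      funext x; simp only [Function.update_apply]; grind
    | succ k ih =>
      intro s hk
      refine Ev.loop_succ (by omega) (Ev.seq (Ev.inc _ _) (Ev.inc _ _)) ((ih _ ?_).cast rfl ?_)
      · simp only [Function.update_apply]; grind
      · funext x; simp only [Function.update_apply]; grind
  refine Ev.seq (h1 _ s rfl) ((ev_move t a hat.symm _).cast rfl ?_)
  funext x; simp only [Function.update_apply]; grind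

/-- `f` is computed by loop programs. -/
def Comp {n : ℕ} (f : List.Vector ℕ n → ℕ) : Prop :=
  ∀ (ins : Fin n → ℕ) (out b : ℕ), (∀ i, ins i < b) → out < b → (∀ i, ins i ≠ out) →
    ∃ P : Prog, ∀ s : ℕ → ℕ, s out = 0 → (∀ r, b ≤ r → s r = 0) →
      Ev P s (Function.update s out (f (List.Vector.ofFn fun i => s (ins i))))

lemma comp_zero : Comp (n := 0) fun _ => 0 := by
  intro ins out b _ _ _
  refine ⟨.skip, fun s hs _ => (Ev.skip s).cast rfl ?_⟩
  funext r
  rw [Function.update_apply]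
  split_ifs with h
  · rw [h, hs]
  · rfl

lemma comp_get {n : ℕ} (i : Fin n) : Comp fun v : List.Vector ℕ n => v.get i := by
  intro ins out b h1 h2 h3
  refine ⟨copyP (ins i) out b, fun s hs hb => ?_⟩
  refine (ev_copy (ins i) out b (h3 i) (h1 i).ne h2.ne s (hb b le_rfl)).cast rfl ?_
  simp [hs]

lemma comp_succ : Comp (n := 1) fun v => Nat.succ v.head := by
  intro ins out b h1 h2 h3
  refine ⟨.seq (copyP (ins 0) out b) (.inc out), fun s hs hb => ?_⟩
  refine Ev.seq (ev_copy (ins 0) out b (h3 0) (h1 0).ne h2.ne s (hb b le_rfl))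
    ((Ev.inc _ _).cast rfl ?_)
  simp [hs]

lemma comp_comp {m n : ℕ} {f : List.Vector ℕ n → ℕ} (g : Fin n → List.Vector ℕ m → ℕ)
    (hf : Comp f) (hg : ∀ i, Comp (g i)) :
    Comp fun a => f (List.Vector.ofFn fun i => g i a) := by
  intro ins out b h1 h2 h3
  -- placing the values
  have place : ∀ k ≤ n, ∃ P : Prog, ∀ s : ℕ → ℕ, (∀ r, b ≤ r → s r = 0) →
      Ev P s (fun r => if h : b ≤ r ∧ r < b + k ∧ r - b < n then
        g ⟨r - b, h.2.2⟩ (List.Vector.ofFn fun i => s (ins i)) else s r) := by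
    intro k
    induction k with
    | zero =>
      intro _
      refine ⟨.skip, fun s _ => (Ev.skip s).cast rfl ?_⟩
      funext r
      rw [dif_neg (by omega)]
    | succ k ih =>
      intro hk
      obtain ⟨P, hP⟩ := ih (by omega)
      obtain ⟨Q, hQ⟩ := hg ⟨k, hk⟩ ins (b + k) (b + k + 1) (fun i => by have := h1 i; omega)
        (by omega) (fun i => by have := h1 i; omega)
      refine ⟨.seq P Q, fun s hs => Ev.seq (hP s hs) ((hQ _ ?_ ?_).cast rfl ?_)⟩
      · rw [dif_neg (by omega)]; exact hs _ (by omega)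
      · intro r hr; rw [dif_neg (by omega)]; exact hs _ (by omega)
      · have e : (fun i => if h : b ≤ ins i ∧ ins i < b + k ∧ ins i - b < n then
            g ⟨ins i - b, h.2.2⟩ (List.Vector.ofFn fun i => s (ins i)) else s (ins i)) =
            fun i => s (ins i) := by
          funext i
          rw [dif_neg (by have := h1 i; omega)]
        rw [e]
        funext r
        rw [Function.update_apply]
        by_cases hr : r = b + k
        · subst hr
          rw [if_pos rfl, dif_pos (by omega)]
          congr 1
          simp
        · rw [if_neg hr]
          by_cases hr2 : b ≤ r ∧ r < b + k ∧ r - b < n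
          · rw [dif_pos hr2, dif_pos (by omega)]
          · rw [dif_neg hr2, dif_neg (by omega)]
  have clr : ∀ k, ∃ P : Prog, ∀ s : ℕ → ℕ,
      Ev P s (fun r => if b ≤ r ∧ r < b + k then 0 else s r) := by
    intro k
    induction k with
    | zero =>
      refine ⟨.skip, fun s => (Ev.skip s).cast rfl ?_⟩
      funext r
      rw [if_neg (by omega)]
    | succ k ih =>
      obtain ⟨P, hP⟩ := ih
      refine ⟨.seq P (.loop (b + k) .skip), fun s => Ev.seq (hP s) ((ev_clear _ _).cast rfl ?_)⟩
      funext r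
      simp only [Function.update_apply]; grind
  obtain ⟨P1, hP1⟩ := place n le_rfl
  obtain ⟨P2, hP2⟩ := hf (fun i => b + i) out (b + n) (fun i => by omega) (by omega)
    (fun i => by omega)
  obtain ⟨P3, hP3⟩ := clr n
  refine ⟨.seq P1 (.seq P2 P3), fun s hs hb => Ev.seq (hP1 s hb) (Ev.seq (hP2 _ ?_ ?_)
    ((hP3 _).cast rfl ?_))⟩
  · rw [dif_neg (by omega)]; exact hs
  · intro r hr; rw [dif_neg (by omega)]; exact hb _ (by omega)
  · funext r
    by_cases hr : b ≤ r ∧ r < b + n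
    · rw [if_pos hr, Function.update_apply, if_neg (by omega), hb r hr.1]
    · rw [if_neg hr]
      simp only [Function.update_apply]
      by_cases hro : r = out
      · rw [if_pos hro, if_pos hro]
        congr 2
        funext i
        rw [dif_pos (by have := i.2; omega)]
        congr 1
        ext; simp
      · rw [if_neg hro, if_neg hro, dif_neg (by omega)]

lemma comp_prec {n : ℕ} {f : List.Vector ℕ n → ℕ} {g : List.Vector ℕ (n + 2) → ℕ}
    (hf : Comp f) (hg : Comp g) :
    Comp fun v : List.Vector ℕ (n + 1) =>
      v.head.rec (f v.tail) fun y IH => g (y ::ᵥ IH ::ᵥ v.tail) := by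
  intro ins out b h1 h2 h3
  obtain ⟨Pf, hPf⟩ := hf (fun i => ins i.succ) (b + 2) (b + 4)
    (fun i => by have := h1 i.succ; omega) (by omega) (fun i => by have := h1 i.succ; omega)
  obtain ⟨Pg, hPg⟩ := hg (Fin.cons (b + 1) (Fin.cons (b + 2) fun i => ins i.succ)) (b + 3) (b + 4)
    (by
      intro i
      refine Fin.cases ?_ (fun i => ?_) i
      · simp
      · refine Fin.cases ?_ (fun i => ?_) i
        · simp
        · have := h1 i.succ; simp only [Fin.cons_succ]; omega) (by omega)
    (by
      intro i
      refine Fin.cases ?_ (fun i => ?_) i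
      · simp
      · refine Fin.cases ?_ (fun i => ?_) i
        · simp
        · have := h1 i.succ; simp only [Fin.cons_succ]; omega)
  refine ⟨.seq (copyP (ins 0) b (b + 3)) (.seq Pf (.seq
    (.loop b (.seq Pg (.seq (.loop (b + 2) .skip) (.seq (.loop (b + 3) (.inc (b + 2)))
      (.inc (b + 1)))))) (.seq (.loop (b + 1) .skip) (.loop (b + 2) (.inc out))))),
    fun s hs hb => ?_⟩
  have q0 := h1 0
  set w : List.Vector ℕ n := List.Vector.ofFn fun i => s (ins i.succ) with hw
  set F : ℕ → ℕ := fun k => k.rec (f w) fun y IH => g (y ::ᵥ IH ::ᵥ w) with hF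
  let st : ℕ → ℕ → ℕ → ℕ → ℕ := fun c y a =>
    Function.update (Function.update (Function.update s b c) (b + 1) y) (b + 2) a
  have hst : ∀ c y a r, r < b → st c y a r = s r := by
    intro c y a r hr
    simp only [st, Function.update_apply]; grind
  have hst2 : ∀ c y a r, b + 3 ≤ r → st c y a r = 0 := by
    intro c y a r hr
    have := hb r (by omega)
    simp only [st, Function.update_apply]; grind
  have hstb : ∀ c y a, st c y a b = c := by
    intro c y a
    simp only [st, Function.update_apply]; grind
  have hst1 : ∀ c y a, st c y a (b + 1) = y := by
    intro c y a
    simp only [st, Function.update_apply]; grind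
  have hsta : ∀ c y a, st c y a (b + 2) = a := by
    intro c y a
    simp only [st, Function.update_apply]; grind
  have hloop : ∀ k j, Ev (.loop b (.seq Pg (.seq (.loop (b + 2) .skip)
      (.seq (.loop (b + 3) (.inc (b + 2))) (.inc (b + 1)))))) (st k j (F j))
      (st 0 (j + k) (F (j + k))) := by
    intro k
    induction k with
    | zero => intro j; exact Ev.loop_zero (hstb _ _ _)
    | succ k ih =>
      intro j
      have e1 : Function.update (st (k + 1) j (F j)) b (st (k + 1) j (F j) b - 1)
          = st k j (F j) := by
        rw [hstb]
        funext r
        simp only [st, Function.update_apply]; grind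
      have e2 := hPg (st k j (F j)) (hst2 _ _ _ _ (by omega)) (fun r hr => hst2 _ _ _ _ (by omega))
      have e3 : g (List.Vector.ofFn fun i => st k j (F j)
          ((Fin.cons (b + 1) (Fin.cons (b + 2) fun i => ins i.succ) : Fin (n + 2) → ℕ) i))
          = F (j + 1) := by
        have : (List.Vector.ofFn fun i => st k j (F j)
          ((Fin.cons (b + 1) (Fin.cons (b + 2) fun i => ins i.succ) : Fin (n + 2) → ℕ) i))
          = j ::ᵥ F j ::ᵥ w := by
          simp only [List.Vector.ofFn, Fin.cons_zero, Fin.cons_succ, hst1, hsta, hw]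
          congr 2
          · congr 1
            funext i
            exact hst _ _ _ _ (h1 _)
        rw [this]
      rw [e3] at e2
      refine Ev.loop_succ (by rw [hstb]; omega)
        (Ev.seq (e2.cast e1 rfl) (Ev.seq (ev_clear _ _) (Ev.seq (ev_move _ _ (by omega) _)
          (Ev.inc _ _)))) ((ih (j + 1)).cast ?_ ?_)
      · funext r
        have := hst2 k j (F j) r
        simp only [st, Function.update_apply] at this ⊢
        grind
      · rw [show j + 1 + k = j + (k + 1) by omega]
  refine Ev.seq (ev_copy (ins 0) b (b + 3) (by omega) (by omega) (by omega) s (hb _ (by omega)))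
    (Ev.seq ((hPf (st (s (ins 0)) 0 0) (hsta _ _ _) (fun r hr => hst2 _ _ _ _ (by omega))).cast
      ?_ rfl) (Ev.seq ((hloop (s (ins 0)) 0).cast ?_ rfl) (Ev.seq (ev_clear _ _)
        ((ev_move _ _ (by omega) _).cast rfl ?_))))
  · funext r
    have := hb r
    simp only [st, Function.update_apply]; grind
  · have e : (fun i : Fin n => st (s (ins 0)) 0 0 (ins i.succ)) = fun i => s (ins i.succ) := by
      funext i; exact hst _ _ _ _ (h1 _)
    rw [e]
    have e0 : F 0 = f (List.Vector.ofFn fun i => s (ins i.succ)) := rfl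
    funext r
    simp only [st, Function.update_apply, e0]; grind
  · have e : (List.Vector.ofFn fun i => s (ins i)) = s (ins 0) ::ᵥ w := rfl
    rw [e]
    simp only [List.Vector.head_cons, List.Vector.tail_cons]
    change _ = Function.update s out (F (s (ins 0)))
    rw [show 0 + s (ins 0) = s (ins 0) by omega]
    funext r
    have := hb r
    simp only [st, Function.update_apply]; grind

lemma comp_of_primrec {n : ℕ} {f : List.Vector ℕ n → ℕ} (h : Nat.Primrec' f) : Comp f := by
  induction h with
  | zero => exact comp_zero
  | succ => exact comp_succ
  | get i => exact comp_get i
  | comp g _ _ ihf ihg => exact comp_comp g ihf ihg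
  | prec _ _ ihf ihg => exact comp_prec ihf ihg

/-! ### Compiling loop programs to counter machines -/

/-- One step, ignoring the time counter. -/
def nx (M : TCM) (x y : ℕ × ℕ × ℕ) : Prop :=
  ∀ t, M.next (x.1, x.2.1, x.2.2, t) = some (y.1, y.2.1, y.2.2, t + 1)

/-- Reachability. -/
def Rch (M : TCM) : ℕ × ℕ × ℕ → ℕ × ℕ × ℕ → Prop := Relation.ReflTransGen (nx M)

lemma nx_of_step {M : TCM} {q a c q' a' c' : ℕ} {d1 d2 : ℤ} (b1 b2 : Bool)
    (h : M.step q b1 b2 = some (q', d1, d2))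
    (hb1 : b1 = true ↔ a ≠ 0) (hb2 : b2 = true ↔ c ≠ 0)
    (ha : (a' : ℤ) = a + d1) (hc : (c' : ℤ) = c + d2) : nx M (q, a, c) (q', a', c') := by
  intro t
  have e1 : (decide (a ≠ 0) : Bool) = b1 := by
    rw [Bool.eq_iff_iff, decide_eq_true_eq]; exact hb1.symm
  have e2 : (decide (c ≠ 0) : Bool) = b2 := by
    rw [Bool.eq_iff_iff, decide_eq_true_eq]; exact hb2.symm
  unfold TCM.next
  simp only [e1, e2, h, ← ha, ← hc]
  simp

/-- Rows of the multiplication gadget. -/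
def mulF (k q0 j : ℕ) (b1 b2 : Bool) : ℕ × ℤ × ℤ :=
  if j = 0 then (if b1 then (q0 + 1, -1, 1) else (q0 + k, 0, 0))
  else if j < k then (q0 + (j + 1) % k, 0, 1)
  else (if b2 then (q0 + k, 1, -1) else (q0 + k + 1, 0, 0))

/-- Rows of the divisibility gadget. -/
def divF (k q0 yes no j : ℕ) (b1 b2 : Bool) : ℕ × ℤ × ℤ :=
  if j < k then
    (if b1 then (q0 + (j + 1) % k, -1, 1) else if j = 0 then (q0 + k, 0, 0) else (q0 + 2 * k, 0, 0))
  else if j = k then (if b2 then (q0 + k + 1, 1, -1) else (yes, 0, 0))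
  else if j < 2 * k then (q0 + k + (j - k + 1) % k, 0, -1)
  else (if b2 then (q0 + 2 * k, 1, -1) else (no, 0, 0))

lemma mul_gadget {M : TCM} {k q : ℕ} (hk : 2 ≤ k)
    (h : ∀ j ≤ k, ∀ b1 b2, M.step (q + j) b1 b2 = some (mulF k q j b1 b2)) (a : ℕ) :
    Rch M (q, a, 0) (q + k + 1, k * a, 0) := by
  have inner : ∀ i, 1 ≤ i → i < k → ∀ a c, Rch M (q, a + 1, c) (q + i, a, c + i) := by
    intro i hi
    induction i, hi using Nat.le_induction with
    | base =>
      intro _ a c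
      refine Relation.ReflTransGen.single ?_
      have := h 0 (by omega) true (decide (c ≠ 0))
      exact nx_of_step true (decide (c ≠ 0)) this (by simp) (by simp) (by push_cast; omega) (by push_cast; omega)
    | succ i hi ih =>
      intro hik a c
      refine Relation.ReflTransGen.tail (ih (by omega) a c) ?_
      have := h i (by omega) (decide (a ≠ 0)) true
      rw [mulF, if_neg (by omega), if_pos (by omega), Nat.mod_eq_of_lt hik] at this
      exact nx_of_step _ _ this (by simp) (by simp; omega) (by push_cast; omega)
        (by push_cast; omega)
  have round : ∀ a c, Rch M (q, a + 1, c) (q, a, c + k) := by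
    intro a c
    refine Relation.ReflTransGen.tail (inner (k - 1) (by omega) (by omega) a c) ?_
    have := h (k - 1) (by omega) (decide (a ≠ 0)) true
    rw [mulF, if_neg (by omega), if_pos (by omega), show k - 1 + 1 = k by omega,
      Nat.mod_self] at this
    exact nx_of_step _ _ this (by simp) (by simp; omega) (by push_cast; omega)
      (by push_cast; omega)
  have outer : ∀ a c, Rch M (q, a, c) (q, 0, c + k * a) := by
    intro a
    induction a with
    | zero => intro c; exact Relation.ReflTransGen.refl
    | succ a ih =>
      intro c
      have := (round a c).trans (ih (c + k))
      rwa [show c + k + k * a = c + k * (a + 1) by ring] at this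
  have mv : ∀ c a, Rch M (q + k, a, c) (q + k, a + c, 0) := by
    intro c
    induction c with
    | zero => intro a; exact Relation.ReflTransGen.refl
    | succ c ih =>
      intro a
      have e := h k le_rfl (decide (a ≠ 0)) true
      rw [mulF, if_neg (by omega), if_neg (by omega), if_pos rfl] at e
      have := ih (a + 1)
      rw [show a + 1 + c = a + (c + 1) by ring] at this
      exact Relation.ReflTransGen.head
        (nx_of_step _ _ e (by simp) (by simp) (by push_cast; omega) (by push_cast; omega)) this
  have s1 := h 0 (by omega) false (decide (0 + k * a ≠ 0))
  have s2 := h k le_rfl (decide (0 + (0 + k * a) ≠ 0)) false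
  rw [mulF, if_neg (by omega), if_neg (by omega)] at s2
  refine (outer a 0).trans (Relation.ReflTransGen.head (nx_of_step _ _ s1 (by simp) (by simp)
    (a' := 0) (c' := 0 + k * a) (by simp) (by simp)) ((mv _ _).trans
      (Relation.ReflTransGen.single (nx_of_step _ _ s2 (by simp) (by simp) ?_ (by simp)))))
  simp

lemma div_run {M : TCM} {k q yes no : ℕ} (hk : 2 ≤ k)
    (h : ∀ j ≤ 2 * k, ∀ b1 b2, M.step (q + j) b1 b2 = some (divF k q yes no j b1 b2)) :
    ∀ n i c, Rch M (q + i % k, n, c) (q + (i + n) % k, 0, c + n) := by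
  intro n
  induction n with
  | zero => intro i c; exact Relation.ReflTransGen.refl
  | succ n ih =>
    intro i c
    have hi : i % k < k := Nat.mod_lt _ (by omega)
    have e := h (i % k) (by omega) true (decide (c ≠ 0))
    rw [divF, if_pos hi, if_pos rfl, show (i % k + 1) % k = (i + 1) % k by simp] at e
    have := ih (i + 1) (c + 1)
    rw [show i + 1 + n = i + (n + 1) by ring, show c + 1 + n = c + (n + 1) by ring] at this
    exact Relation.ReflTransGen.head
      (nx_of_step _ _ e (by simp) (by simp) (by push_cast; omega) (by push_cast; omega)) this

lemma div_yes {M : TCM} {k q yes no : ℕ} (hk : 2 ≤ k)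
    (h : ∀ j ≤ 2 * k, ∀ b1 b2, M.step (q + j) b1 b2 = some (divF k q yes no j b1 b2)) (b : ℕ) :
    Rch M (q, k * b, 0) (yes, b, 0) := by
  have h1 := div_run hk h (k * b) 0 0
  simp only [Nat.zero_mod, Nat.zero_add, Nat.mul_mod_right, Nat.add_zero] at h1
  have inner : ∀ i, 1 ≤ i → i < k → ∀ d c, Rch M (q + k, d, c + k) (q + k + i, d + 1, c + k - i) := by
    intro i hi
    induction i, hi using Nat.le_induction with
    | base =>
      intro _ a c
      refine Relation.ReflTransGen.single ?_
      have := h k (by omega) (decide (a ≠ 0)) true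
      rw [divF, if_neg (by omega), if_pos rfl, if_pos rfl] at this
      exact nx_of_step _ _ this (by simp) (by simp; omega) (by push_cast; omega) (by push_cast; omega)
    | succ i hi ih =>
      intro hik a c
      refine Relation.ReflTransGen.tail (ih (by omega) a c) ?_
      have := h (k + i) (by omega) true true
      rw [divF, if_neg (by omega), if_neg (by omega), if_pos (by omega),
        show k + i - k + 1 = i + 1 by omega, Nat.mod_eq_of_lt hik, ← Nat.add_assoc] at this
      exact nx_of_step _ _ this (by simp) (by simp; omega) (by push_cast; omega)
        (by push_cast; omega)
  have round : ∀ d c, Rch M (q + k, d, c + k) (q + k, d + 1, c) := by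
    intro d c
    refine Relation.ReflTransGen.tail (inner (k - 1) (by omega) (by omega) d c) ?_
    have := h (k + (k - 1)) (by omega) true true
    rw [divF, if_neg (by omega), if_neg (by omega), if_pos (by omega),
        show k + (k - 1) - k + 1 = k by omega, Nat.mod_self, ← Nat.add_assoc] at this
    exact nx_of_step _ _ this (by simp) (by simp; omega) (by push_cast; omega)
      (by push_cast; omega)
  have outer : ∀ b d, Rch M (q + k, d, k * b) (q + k, d + b, 0) := by
    intro b
    induction b with
    | zero => intro d; exact Relation.ReflTransGen.refl
    | succ b ih =>
      intro d
      have := (round d (k * b)).trans (ih (d + 1))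
      rwa [show d + 1 + b = d + (b + 1) by ring, ← Nat.mul_succ] at this
  have s1 := h 0 (by omega) false (decide (k * b ≠ 0))
  rw [divF, if_pos (by omega)] at s1
  have s2 := h k (by omega) (decide (0 + b ≠ 0)) false
  rw [divF, if_neg (by omega), if_pos rfl] at s2
  refine h1.trans (Relation.ReflTransGen.head (nx_of_step _ _ s1 (by simp) (by simp)
    (a' := 0) (c' := k * b) (by simp) (by simp)) ((outer b 0).trans
      (Relation.ReflTransGen.single (nx_of_step _ _ s2 (by simp) (by simp) ?_ (by simp)))))
  simp

lemma div_no {M : TCM} {k q yes no : ℕ} (hk : 2 ≤ k)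
    (h : ∀ j ≤ 2 * k, ∀ b1 b2, M.step (q + j) b1 b2 = some (divF k q yes no j b1 b2)) (a : ℕ)
    (ha : ¬ k ∣ a) :
    Rch M (q, a, 0) (no, a, 0) := by
  have h1 := div_run hk h a 0 0
  simp only [Nat.zero_mod, Nat.zero_add, Nat.add_zero] at h1
  have hm : a % k < k := Nat.mod_lt _ (by omega)
  have hm0 : a % k ≠ 0 := fun e => ha (Nat.dvd_of_mod_eq_zero e)
  have mv : ∀ c a, Rch M (q + 2 * k, a, c) (q + 2 * k, a + c, 0) := by
    intro c
    induction c with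
    | zero => intro a; exact Relation.ReflTransGen.refl
    | succ c ih =>
      intro a
      have e := h (2 * k) le_rfl (decide (a ≠ 0)) true
      rw [divF, if_neg (by omega), if_neg (by omega), if_neg (by omega), if_pos rfl] at e
      have := ih (a + 1)
      rw [show a + 1 + c = a + (c + 1) by ring] at this
      exact Relation.ReflTransGen.head
        (nx_of_step _ _ e (by simp) (by simp) (by push_cast; omega) (by push_cast; omega)) this
  have s1 := h (a % k) (by omega) false (decide (a ≠ 0))
  rw [divF, if_pos hm, if_neg (by simp), if_neg hm0] at s1
  have s2 := h (2 * k) (by omega) (decide (0 + a ≠ 0)) false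
  rw [divF, if_neg (by omega), if_neg (by omega), if_neg (by omega), if_neg (by simp)] at s2
  refine h1.trans (Relation.ReflTransGen.head (nx_of_step _ _ s1 (by simp) (by simp)
    (a' := 0) (c' := a) (by simp) (by simp)) ((mv a 0).trans
      (Relation.ReflTransGen.single (nx_of_step _ _ s2 (by simp) (by simp) ?_ (by simp)))))
  simp

/-- Number of states used by a program. -/
def Prog.size : Prog → ℕ
  | .skip => 0
  | .inc r => prm r + 1
  | .seq P Q => P.size + Q.size
  | .loop r P => 2 * prm r + 2 + P.size

/-- The transition table of a program placed at `base`. -/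
def Prog.codeF : Prog → ℕ → ℕ → Bool → Bool → ℕ × ℤ × ℤ
  | .skip, _, _, _, _ => (0, 0, 0)
  | .inc r, base, q, b1, b2 => mulF (prm r) base (q - base) b1 b2
  | .seq P Q, base, q, b1, b2 =>
      if q < base + P.size then P.codeF base q b1 b2 else Q.codeF (base + P.size) q b1 b2
  | .loop r P, base, q, b1, b2 =>
      if q ≤ base + 2 * prm r then
        divF (prm r) base (base + 2 * prm r + 1) (base + (2 * prm r + 2 + P.size)) (q - base) b1 b2
      else if q < base + 2 * prm r + 1 + P.size then P.codeF (base + 2 * prm r + 1) q b1 b2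
      else (base, 0, 0)

/-- All registers are below `B`. -/
def Prog.regsLt (B : ℕ) : Prog → Prop
  | .skip => True
  | .inc r => r < B
  | .seq P Q => P.regsLt B ∧ Q.regsLt B
  | .loop r P => r < B ∧ P.regsLt B

lemma Prog.regsLt_mono {P : Prog} {B B' : ℕ} (hB : B ≤ B') (h : P.regsLt B) : P.regsLt B' := by
  induction P with
  | skip => trivial
  | inc r => exact lt_of_lt_of_le h hB
  | seq P Q ihP ihQ => exact ⟨ihP h.1, ihQ h.2⟩
  | loop r P ih => exact ⟨lt_of_lt_of_le h.1 hB, ih h.2⟩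

lemma Prog.exists_regsLt (P : Prog) : ∃ B, P.regsLt B := by
  induction P with
  | skip => exact ⟨0, trivial⟩
  | inc r => exact ⟨r + 1, Nat.lt_succ_self r⟩
  | seq P Q ihP ihQ =>
    obtain ⟨B1, h1⟩ := ihP
    obtain ⟨B2, h2⟩ := ihQ
    exact ⟨max B1 B2, regsLt_mono (le_max_left _ _) h1, regsLt_mono (le_max_right _ _) h2⟩
  | loop r P ih =>
    obtain ⟨B1, h1⟩ := ih
    exact ⟨max (r + 1) B1, lt_of_lt_of_le (Nat.lt_succ_self r) (le_max_left _ _),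
      regsLt_mono (le_max_right _ _) h1⟩

lemma prm_two_le (r : ℕ) : 2 ≤ prm r := (prm_prime r).two_le

lemma Prog.codeF_wf (P : Prog) (base q : ℕ) (b1 b2 : Bool) (h1 : base ≤ q)
    (h2 : q < base + P.size) :
    (P.codeF base q b1 b2).1 ≤ base + P.size ∧ (P.codeF base q b1 b2).2.1.natAbs ≤ 1 ∧
      (P.codeF base q b1 b2).2.2.natAbs ≤ 1 := by
  induction P generalizing base q with
  | skip => simp [Prog.size] at h2; omega
  | inc r =>
    have := prm_two_le r
    have hm : (q - base + 1) % prm r < prm r := Nat.mod_lt _ (by omega)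
    simp only [Prog.codeF, Prog.size, mulF] at h2 ⊢
    split_ifs <;> simp <;> omega
  | seq P Q ihP ihQ =>
    simp only [Prog.codeF, Prog.size] at h2 ⊢
    split_ifs with hq
    · have := ihP base q h1 hq
      exact ⟨by omega, this.2⟩
    · have := ihQ (base + P.size) q (by omega) (by omega)
      exact ⟨by omega, this.2⟩
  | loop r P ih =>
    have := prm_two_le r
    simp only [Prog.codeF, Prog.size] at h2 ⊢
    split_ifs with hq hq2
    · have hm : (q - base + 1) % prm r < prm r := Nat.mod_lt _ (by omega)
      have hm2 : (q - base - prm r + 1) % prm r < prm r := Nat.mod_lt _ (by omega)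
      simp only [divF]
      split_ifs <;> simp <;> omega
    · have := ih (base + 2 * prm r + 1) q (by omega) (by omega)
      exact ⟨by omega, this.2⟩
    · simp

/-- Gödel encoding of the registers. -/
def Gd (B : ℕ) (s : ℕ → ℕ) : ℕ := ∏ i ∈ Finset.range B, prm i ^ s i

lemma Gd_inc {B r : ℕ} (hr : r < B) (s : ℕ → ℕ) :
    Gd B (Function.update s r (s r + 1)) = prm r * Gd B s := by
  unfold Gd
  have hm : r ∈ Finset.range B := Finset.mem_range.2 hr
  rw [← Finset.mul_prod_erase _ _ hm, ← Finset.mul_prod_erase _ (fun i => prm i ^ s i) hm]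
  rw [Function.update_self, pow_succ]
  rw [Finset.prod_congr rfl (g := fun i => prm i ^ s i)]
  · ring
  · intro i hi
    rw [Function.update_of_ne (Finset.ne_of_mem_erase hi)]

lemma Gd_dec {B r : ℕ} (hr : r < B) (s : ℕ → ℕ) (hs : s r ≠ 0) :
    Gd B s = prm r * Gd B (Function.update s r (s r - 1)) := by
  rw [← Gd_inc hr]
  congr 1
  funext x
  simp only [Function.update_apply]; grind

lemma Gd_not_dvd {B r : ℕ} (s : ℕ → ℕ) (hs : s r = 0) : ¬ prm r ∣ Gd B s := by
  intro h
  obtain ⟨i, _, hi⟩ := (prm_prime r).prime.exists_mem_finset_dvd h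
  have h2 := (prm_prime r).dvd_of_dvd_pow hi
  have h3 := (Nat.prime_dvd_prime_iff_eq (prm_prime r) (prm_prime i)).1 h2
  obtain rfl := prm_strictMono.injective h3
  rw [hs, pow_zero] at hi
  exact (prm_prime r).one_lt.ne' (Nat.dvd_one.1 hi)

/-- `M` contains the code of `P` at `base`. -/
def Impl (M : TCM) (P : Prog) (base : ℕ) : Prop :=
  ∀ q b1 b2, base ≤ q → q < base + P.size → M.step q b1 b2 = some (P.codeF base q b1 b2)

lemma Impl.seq_left {M : TCM} {P Q : Prog} {base : ℕ} (h : Impl M (.seq P Q) base) :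
    Impl M P base := by
  intro q b1 b2 h1 h2
  rw [h q b1 b2 h1 (by simp only [Prog.size]; omega), Prog.codeF, if_pos h2]

lemma Impl.seq_right {M : TCM} {P Q : Prog} {base : ℕ} (h : Impl M (.seq P Q) base) :
    Impl M Q (base + P.size) := by
  intro q b1 b2 h1 h2
  rw [h q b1 b2 (by omega) (by simp only [Prog.size]; omega), Prog.codeF, if_neg (by omega)]

lemma Impl.loop_body {M : TCM} {P : Prog} {r base : ℕ} (h : Impl M (.loop r P) base) :
    Impl M P (base + 2 * prm r + 1) := by
  intro q b1 b2 h1 h2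
  rw [h q b1 b2 (by omega) (by simp only [Prog.size]; omega), Prog.codeF, if_neg (by omega),
    if_pos (by omega)]

lemma Impl.loop_div {M : TCM} {P : Prog} {r base : ℕ} (h : Impl M (.loop r P) base) :
    ∀ j ≤ 2 * prm r, ∀ b1 b2, M.step (base + j) b1 b2 = some (divF (prm r) base
      (base + 2 * prm r + 1) (base + (2 * prm r + 2 + P.size)) j b1 b2) := by
  intro j hj b1 b2
  rw [h _ b1 b2 (by omega) (by simp only [Prog.size]; omega), Prog.codeF, if_pos (by omega),
    Nat.add_sub_cancel_left]

lemma loop_iter {M : TCM} {P : Prog} {r base B : ℕ} (h : Impl M (.loop r P) base) (hr : r < B)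
    {s s' : ℕ → ℕ} (hs : s r ≠ 0)
    (hP : Rch M (base + 2 * prm r + 1, Gd B (Function.update s r (s r - 1)), 0)
      (base + 2 * prm r + 1 + P.size, Gd B s', 0)) :
    Relation.TransGen (nx M) (base, Gd B s, 0) (base, Gd B s', 0) := by
  have h1 := div_yes (prm_two_le r) h.loop_div (Gd B (Function.update s r (s r - 1)))
  rw [← Gd_dec hr s hs] at h1
  refine Relation.TransGen.tail' (h1.trans hP) ?_
  have h2 := h (base + 2 * prm r + 1 + P.size) (decide (Gd B s' ≠ 0)) false (by omega)
    (by simp only [Prog.size]; omega)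
  rw [Prog.codeF, if_neg (by omega), if_neg (by omega)] at h2
  exact nx_of_step _ _ h2 (by simp) (by simp) (by simp) (by simp)

lemma loop_exit {M : TCM} {P : Prog} {r base B : ℕ} (h : Impl M (.loop r P) base)
    {s : ℕ → ℕ} (hs : s r = 0) :
    Rch M (base, Gd B s, 0) (base + (Prog.loop r P).size, Gd B s, 0) :=
  div_no (prm_two_le r) h.loop_div _ (Gd_not_dvd s hs)

lemma ev_rch {M : TCM} {P : Prog} {s s' : ℕ → ℕ} {B : ℕ} (h : Ev P s s') (hB : P.regsLt B)
    {base : ℕ} (hI : Impl M P base) :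
    Rch M (base, Gd B s, 0) (base + P.size, Gd B s', 0) := by
  induction h generalizing base with
  | skip s => exact Relation.ReflTransGen.refl
  | inc r s =>
    rw [Gd_inc hB]
    refine mul_gadget (prm_two_le r) ?_ _
    intro j hj b1 b2
    rw [hI _ b1 b2 (by omega) (by simp only [Prog.size]; omega), Prog.codeF,
      Nat.add_sub_cancel_left]
  | seq _ _ ih1 ih2 =>
    have := (ih1 hB.1 hI.seq_left).trans (ih2 hB.2 hI.seq_right)
    rwa [Nat.add_assoc] at this
  | loop_zero hs => exact loop_exit hI hs
  | loop_succ hs _ _ ih1 ih2 =>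
    exact (loop_iter hI hB.1 hs (ih1 hB.2 hI.loop_body)).to_reflTransGen.trans (ih2 hB hI)

/-! ### The machines -/

lemma step_of_mem {M : TCM} {q : ℕ} {b1 b2 : Bool} {v : ℕ × ℤ × ℤ}
    (h : ((q, b1, b2), v) ∈ M.δ) : M.step q b1 b2 = some v := by
  unfold TCM.step
  rcases hf : M.δ.find? (fun e => decide (e.1 = (q, b1, b2))) with _ | e
  · rw [List.find?_eq_none] at hf
    exact absurd (hf _ h) (by simp)
  · have h1 := List.find?_some hf
    have h2 := List.mem_of_find?_eq_some hf
    rw [decide_eq_true_eq] at h1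
    have : e = ((q, b1, b2), v) := List.inj_on_of_nodup_map M.keys_nodup h2 h h1
    rw [hf, this]; rfl

lemma step_none {M : TCM} {q : ℕ} {b1 b2 : Bool}
    (h : ∀ e ∈ M.δ, e.1.1 ≠ q) : M.step q b1 b2 = none := by
  unfold TCM.step
  rw [Option.map_eq_none_iff, List.find?_eq_none]
  intro e he
  rw [decide_eq_true_eq]
  intro h2
  exact h e he (by rw [h2])

/-- The fixed part of the transition table. -/
def tabP (P : Prog) : List ((ℕ × Bool × Bool) × (ℕ × ℤ × ℤ)) :=
  (List.range P.size ×ˢ ([true, false] ×ˢ [true, false])).map fun x =>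
    ((1 + x.1, x.2.1, x.2.2), P.codeF 1 (1 + x.1) x.2.1 x.2.2)

/-- The part of the transition table writing `K + 1` in the first counter. -/
def tabI (m0 K : ℕ) : List ((ℕ × Bool × Bool) × (ℕ × ℤ × ℤ)) :=
  (List.range K).map fun j => ((m0 + j, true, false), (m0 + j + 1, 1, 0))

/-- The full table. -/
def tabM (P : Prog) (K : ℕ) : List ((ℕ × Bool × Bool) × (ℕ × ℤ × ℤ)) :=
  ((0, false, false), (P.size + 2, 1, 0)) ::
    ((P.size + 2 + K, true, false), (1, 0, 0)) :: (tabI (P.size + 2) K ++ tabP P)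

lemma mem_tabP {P : Prog} {e : (ℕ × Bool × Bool) × (ℕ × ℤ × ℤ)} (h : e ∈ tabP P) :
    ∃ q b1 b2, 1 ≤ q ∧ q < 1 + P.size ∧ e = ((q, b1, b2), P.codeF 1 q b1 b2) := by
  unfold tabP at h
  obtain ⟨⟨j, b1, b2⟩, hx, rfl⟩ := List.mem_map.1 h
  have := (List.mem_product.1 hx).1
  rw [List.mem_range] at this
  exact ⟨1 + j, b1, b2, by omega, by omega, rfl⟩

lemma tabP_mem {P : Prog} {q : ℕ} (b1 b2 : Bool) (h1 : 1 ≤ q) (h2 : q < 1 + P.size) :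
    ((q, b1, b2), P.codeF 1 q b1 b2) ∈ tabP P := by
  unfold tabP
  refine List.mem_map.2 ⟨(q - 1, b1, b2), ?_, ?_⟩
  · refine List.mem_product.2 ⟨List.mem_range.2 (by omega), ?_⟩
    cases b1 <;> cases b2 <;> simp
  · simp only [show 1 + (q - 1) = q by omega]

lemma mem_tabI {m0 K : ℕ} {e : (ℕ × Bool × Bool) × (ℕ × ℤ × ℤ)} (h : e ∈ tabI m0 K) :
    ∃ j < K, e = ((m0 + j, true, false), (m0 + j + 1, 1, 0)) := by
  obtain ⟨j, hj, rfl⟩ := List.mem_map.1 h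
  exact ⟨j, List.mem_range.1 hj, rfl⟩

/-- The machine writing `K + 1` into the first counter and then running `P`. -/
def MK (P : Prog) (K : ℕ) : TCM where
  m := P.size + 2 + K + 1
  hm := Nat.succ_pos _
  δ := tabM P K
  keys_nodup := by
    have hP : ((tabP P).map Prod.fst).Nodup := by
      unfold tabP
      rw [List.map_map]
      refine List.Nodup.map ?_ ((List.nodup_range).product (List.Nodup.product (by simp) (by simp)))
      rintro ⟨a, b, c⟩ ⟨a', b', c'⟩ h
      simp only [Function.comp, Prod.mk.injEq] at h ⊢
      exact ⟨by omega, h.2⟩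
    have hI : ((tabI (P.size + 2) K).map Prod.fst).Nodup := by
      unfold tabI
      rw [List.map_map]
      refine List.Nodup.map ?_ List.nodup_range
      intro a a' h
      simp only [Function.comp, Prod.mk.injEq] at h
      omega
    unfold tabM
    rw [List.map_cons, List.map_cons, List.map_append, List.nodup_cons, List.nodup_cons,
      List.nodup_append]
    refine ⟨?_, ?_, hI, hP, ?_⟩
    · rw [List.mem_cons, List.mem_append]
      rintro (h | h | h)
      · simp only [Prod.mk.injEq] at h; omega
      · obtain ⟨e, he, h⟩ := List.mem_map.1 h
        obtain ⟨j, hj, rfl⟩ := mem_tabI he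
        simp only [Prod.mk.injEq] at h; omega
      · obtain ⟨e, he, h⟩ := List.mem_map.1 h
        obtain ⟨q, b1, b2, h1, h2, rfl⟩ := mem_tabP he
        simp only [Prod.mk.injEq] at h; omega
    · rw [List.mem_append]
      rintro (h | h)
      · obtain ⟨e, he, h⟩ := List.mem_map.1 h
        obtain ⟨j, hj, rfl⟩ := mem_tabI he
        simp only [Prod.mk.injEq] at h; omega
      · obtain ⟨e, he, h⟩ := List.mem_map.1 h
        obtain ⟨q, b1, b2, h1, h2, rfl⟩ := mem_tabP he
        simp only [Prod.mk.injEq] at h; omega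
    · intro a ha b hb hab
      obtain ⟨e, he, rfl⟩ := List.mem_map.1 ha
      obtain ⟨j, hj, rfl⟩ := mem_tabI he
      obtain ⟨e, he, rfl⟩ := List.mem_map.1 hb
      obtain ⟨q, b1, b2, h1, h2, rfl⟩ := mem_tabP he
      simp only [Prod.mk.injEq] at hab; omega
  wf := by
    intro e he
    unfold tabM at he
    rw [List.mem_cons, List.mem_cons, List.mem_append] at he
    rcases he with rfl | rfl | he | he
    · simp
    · simp
    · obtain ⟨j, hj, rfl⟩ := mem_tabI he
      simp; omega
    · obtain ⟨q, b1, b2, h1, h2, rfl⟩ := mem_tabP he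
      have := P.codeF_wf 1 q b1 b2 h1 h2
      exact ⟨by simp only; omega, by simp only; omega, this.2⟩

lemma MK_impl (P : Prog) (K : ℕ) : Impl (MK P K) P 1 := by
  intro q b1 b2 h1 h2
  refine step_of_mem ?_
  change _ ∈ tabM P K
  unfold tabM
  have := tabP_mem b1 b2 h1 h2
  simp [this]

lemma MK_start (P : Prog) (K : ℕ) : Rch (MK P K) (0, 0, 0) (1, K + 1, 0) := by
  have h0 : (MK P K).step 0 false false = some (P.size + 2, 1, 0) :=
    step_of_mem (List.mem_cons_self)
  have h1 : (MK P K).step (P.size + 2 + K) true false = some (1, 0, 0) :=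
    step_of_mem (List.mem_cons_of_mem _ List.mem_cons_self)
  have h2 : ∀ j < K, (MK P K).step (P.size + 2 + j) true false =
      some (P.size + 2 + j + 1, 1, 0) := by
    intro j hj
    refine step_of_mem (List.mem_cons_of_mem _ (List.mem_cons_of_mem _ (List.mem_append_left _ ?_)))
    exact List.mem_map.2 ⟨j, List.mem_range.2 hj, rfl⟩
  have h3 : ∀ j ≤ K, Rch (MK P K) (0, 0, 0) (P.size + 2 + j, j + 1, 0) := by
    intro j
    induction j with
    | zero =>
      intro _
      exact Relation.ReflTransGen.single
        (nx_of_step _ _ h0 (by simp) (by simp) (by simp) (by simp))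
    | succ j ih =>
      intro hj
      exact Relation.ReflTransGen.tail (ih (by omega))
        (nx_of_step _ _ (h2 j (by omega)) (by simp) (by simp) (by simp) (by simp))
  exact Relation.ReflTransGen.tail (h3 K le_rfl)
    (nx_of_step _ _ h1 (by simp) (by simp) (by simp) (by simp))

lemma MK_exit (P : Prog) (K a c t : ℕ) : (MK P K).next (1 + P.size, a, c, t) = none := by
  unfold TCM.next
  rw [step_none]
  intro e he
  change e ∈ tabM P K at he
  unfold tabM at he
  rw [List.mem_cons, List.mem_cons, List.mem_append] at he
  rcases he with rfl | rfl | he | he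
  · simp only; omega
  · simp only; omega
  · obtain ⟨j, hj, rfl⟩ := mem_tabI he
    simp only; omega
  · obtain ⟨q, b1, b2, h1, h2, rfl⟩ := mem_tabP he
    simp only; omega

lemma run_rch {M : TCM} {x y : ℕ × ℕ × ℕ} (h : Rch M x y) {n : ℕ}
    (hx : M.run n = some (x.1, x.2.1, x.2.2, n)) :
    ∃ k, n ≤ k ∧ M.run k = some (y.1, y.2.1, y.2.2, k) := by
  induction h with
  | refl => exact ⟨n, le_rfl, hx⟩
  | tail _ h ih =>
    obtain ⟨k, hk, e⟩ := ih
    refine ⟨k + 1, by omega, ?_⟩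
    rw [TCM.run, e, Option.bind_some]
    exact h k

lemma run_trans {M : TCM} {x y : ℕ × ℕ × ℕ} (h : Relation.TransGen (nx M) x y) {n : ℕ}
    (hx : M.run n = some (x.1, x.2.1, x.2.2, n)) :
    ∃ k, n < k ∧ M.run k = some (y.1, y.2.1, y.2.2, k) := by
  obtain ⟨z, h1, h2⟩ := Relation.TransGen.tail'_iff.1 h
  obtain ⟨k, hk, e⟩ := run_rch h1 hx
  refine ⟨k + 1, by omega, ?_⟩
  rw [TCM.run, e, Option.bind_some]
  exact h2 k

lemma run_none_of_halt {M : TCM} {n : ℕ} {C : Config} (h : M.run n = some C)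
    (h2 : M.next C = none) : ∀ k, n < k → M.run k = none := by
  intro k hk
  induction k, hk using Nat.le_induction with
  | base => rw [TCM.run, h, Option.bind_some, h2]
  | succ k hk ih => rw [TCM.run, ih, Option.bind_none]

/-- Registers during the search. -/
def sT (n t f : ℕ) : ℕ → ℕ := fun r => if r = 0 then n else if r = 1 then t else if r = 2 then f else 0

/-- Search machines for a primitive recursive predicate. -/
lemma exists_machine (T : ℕ → ℕ → ℕ) (hT : Primrec₂ T) (hT1 : ∀ n t, T n t ≤ 1) :
    ∃ P : Prog, ∀ n, (MK P (prm 0 ^ n * prm 2 - 1)).Halts ↔ ∃ t, T n t = 0 := by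
  have hc := comp_of_primrec (Nat.Primrec'.prim_iff₂.2 hT)
  obtain ⟨P, hP⟩ := hc ![0, 1] 2 3 (by intro i; fin_cases i <;> simp) (by omega)
    (by intro i; fin_cases i <;> simp)
  set body : Prog := .seq P (.inc 1) with hbody
  set Q : Prog := .loop 2 body with hQ
  have hev : ∀ n t, Ev body (sT n t 0) (sT n (t + 1) (T n t)) := by
    intro n t
    have := hP (sT n t 0) (by simp [sT]) (by intro r hr; simp only [sT]; grind)
    refine Ev.seq this ((Ev.inc _ _).cast rfl ?_)
    funext r
    simp only [Function.update_apply, sT]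
    simp
    grind
  obtain ⟨B0, hB0⟩ := Q.exists_regsLt
  set B := max B0 3 with hBdef
  have hB : Q.regsLt B := Prog.regsLt_mono (le_max_left _ _) hB0
  have hB3 : 3 ≤ B := le_max_right _ _
  refine ⟨Q, fun n => ?_⟩
  set M := MK Q (prm 0 ^ n * prm 2 - 1) with hM
  have hI : Impl M Q 1 := MK_impl _ _
  have hG : Gd B (sT n 0 1) = prm 0 ^ n * prm 2 := by
    unfold Gd
    obtain ⟨d, hd⟩ := Nat.exists_eq_add_of_le hB3
    rw [hd, Finset.prod_range_add, Finset.prod_range_succ, Finset.prod_range_succ,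
      Finset.prod_range_succ, Finset.prod_eq_one (s := Finset.range d)]
    · simp [sT]
    · intro i _
      have : sT n 0 1 (3 + i) = 0 := by simp only [sT]; grind
      rw [this, pow_zero]
  have hpos : 0 < prm 0 ^ n * prm 2 :=
    Nat.mul_pos (Nat.pow_pos (prm_prime 0).pos) (prm_prime 2).pos
  have hst : Rch M (0, 0, 0) (1, Gd B (sT n 0 1), 0) := by
    have := MK_start Q (prm 0 ^ n * prm 2 - 1)
    rw [Nat.sub_add_cancel hpos] at this
    rw [hG]
    exact this
  have hit : ∀ t, Relation.TransGen (nx M) (1, Gd B (sT n t 1), 0)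
      (1, Gd B (sT n (t + 1) (T n t)), 0) := by
    intro t
    refine loop_iter hI hB.1 (by simp [sT]) ?_
    have e : Function.update (sT n t 1) 2 (sT n t 1 2 - 1) = sT n t 0 := by
      funext r
      simp only [Function.update_apply, sT]; grind
    rw [e]
    exact ev_rch (hev n t) hB.2 hI.loop_body
  have hrun0 : M.run 0 = some (0, 0, 0, 0) := rfl
  constructor
  · rintro ⟨N, C, hC, hN⟩
    by_contra hno
    push Not at hno
    have h1 : ∀ t, T n t = 1 := fun t => by have := hT1 n t; have := hno t; omega
    obtain ⟨k0, _, hk0⟩ := run_rch hst hrun0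
    have : ∀ t, ∃ k, t ≤ k ∧ M.run k = some (1, Gd B (sT n t 1), 0, k) := by
      intro t
      induction t with
      | zero => exact ⟨k0, by omega, hk0⟩
      | succ t ih =>
        obtain ⟨k, hk, e⟩ := ih
        have h2 := hit t
        rw [h1 t] at h2
        obtain ⟨k', hk', e'⟩ := run_trans h2 e
        exact ⟨k', by omega, e'⟩
    obtain ⟨k, hk, e⟩ := this (N + 1)
    rw [run_none_of_halt hC hN k (by omega)] at e
    cases e
  · intro hex
    have h0 := Nat.find_spec hex
    have hmin : ∀ t < Nat.find hex, T n t = 1 := fun t ht => by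
      have := hT1 n t
      have := Nat.find_min hex ht
      omega
    set t0 := Nat.find hex
    have hr : ∀ t ≤ t0, Rch M (0, 0, 0) (1, Gd B (sT n t 1), 0) := by
      intro t
      induction t with
      | zero => intro _; exact hst
      | succ t ih =>
        intro ht
        have h2 := hit t
        rw [hmin t (by omega)] at h2
        exact (ih (by omega)).trans h2.to_reflTransGen
    have h3 := hit t0
    rw [h0] at h3
    have h4 := ((hr t0 le_rfl).trans h3.to_reflTransGen).trans
      (loop_exit (B := B) hI (s := sT n (t0 + 1) 0) (by simp [sT]))
    obtain ⟨k, _, hk⟩ := run_rch h4 hrun0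
    exact ⟨k, _, hk, MK_exit Q _ _ _ _⟩

/-! ### Undecidability -/

lemma encode_list_map {α : Type*} [Encodable α] (l : List α) :
    Encodable.encode l = Encodable.encode (l.map (Encodable.encode : α → ℕ)) := by
  induction l with
  | nil => rfl
  | cons a l ih => rw [List.map_cons, Encodable.encode_list_cons, Encodable.encode_list_cons, ih]; rfl

lemma primrec_pow (a : ℕ) : Primrec fun n : ℕ => a ^ n := by
  have h : Primrec fun n : ℕ => (n.rec 1 fun _ y => y * a : ℕ) :=
    Primrec.nat_rec₁ 1 (Primrec.nat_mul.comp Primrec.snd (Primrec.const a))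
  refine h.of_eq fun n => ?_
  induction n with
  | zero => rfl
  | succ n ih => rw [pow_succ, ← ih]

lemma primrec_encode_MK (P : Prog) : Primrec fun K => encodeTCM (MK P K) := by
  have hm : Primrec fun K : ℕ => P.size + 2 + K + 1 :=
    Primrec.succ.comp (Primrec.nat_add.comp (Primrec.const _) Primrec.id)
  let c1 := Encodable.encode (true, false)
  let c2 := Encodable.encode ((1 : ℤ), (0 : ℤ))
  let c3 := Encodable.encode (((0, false, false), (P.size + 2, 1, 0)) :
    (ℕ × Bool × Bool) × (ℕ × ℤ × ℤ))
  let c4 := Encodable.encode ((1, 0, 0) : ℕ × ℤ × ℤ)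
  have hrow : Primrec fun j : ℕ =>
      Nat.pair (Nat.pair (P.size + 2 + j) c1) (Nat.pair (P.size + 2 + j + 1) c2) :=
    Primrec₂.natPair.comp
      (Primrec₂.natPair.comp (Primrec.nat_add.comp (Primrec.const _) Primrec.id) (Primrec.const _))
      (Primrec₂.natPair.comp
        (Primrec.succ.comp (Primrec.nat_add.comp (Primrec.const _) Primrec.id)) (Primrec.const _))
  have hl : Primrec fun K : ℕ =>
      c3 :: Nat.pair (Nat.pair (P.size + 2 + K) c1) c4 ::
        ((List.range K).map (fun j : ℕ => Nat.pair (Nat.pair (P.size + 2 + j) c1)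
          (Nat.pair (P.size + 2 + j + 1) c2)) ++ (tabP P).map Encodable.encode) := by
    refine Primrec.list_cons.comp (Primrec.const _) (Primrec.list_cons.comp ?_
      (Primrec.list_append.comp ?_ (Primrec.const _)))
    · exact Primrec₂.natPair.comp (Primrec₂.natPair.comp
        (Primrec.nat_add.comp (Primrec.const _) Primrec.id) (Primrec.const _)) (Primrec.const _)
    · exact Primrec.list_map Primrec.list_range (hrow.comp Primrec.snd)
  refine (Primrec₂.natPair.comp hm (Primrec.encode.comp hl)).of_eq fun K => ?_
  have e : encodeTCM (MK P K) = Nat.pair (P.size + 2 + K + 1) (Encodable.encode (tabM P K)) := rfl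
  rw [e, encode_list_map (tabM P K)]
  congr 2
  unfold tabM tabI
  rw [List.map_cons, List.map_cons, List.map_append, List.map_map]
  rfl

/-- Bounded evaluation as a `0`/`1` predicate (`0` means: halted). -/
def haltT (c t : ℕ) : ℕ :=
  cond (Nat.Partrec.Code.evaln t (Denumerable.ofNat Nat.Partrec.Code c) 0).isSome 0 1

lemma primrec_haltT : Primrec₂ haltT := by
  have h : Primrec fun p : ℕ × ℕ => ((p.2, Denumerable.ofNat Nat.Partrec.Code p.1), (0 : ℕ)) :=
    Primrec.pair (Primrec.pair Primrec.snd ((Primrec.ofNat _).comp Primrec.fst)) (Primrec.const 0)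
  exact Primrec.cond (Primrec.option_isSome.comp (Nat.Partrec.Code.primrec_evaln.comp h))
    (Primrec.const 0) (Primrec.const 1)

lemma haltT_iff (c : Nat.Partrec.Code) :
    (∃ t, haltT (Encodable.encode c) t = 0) ↔ (Nat.Partrec.Code.eval c 0).Dom := by
  have key : ∀ t, haltT (Encodable.encode c) t = 0 ↔
      ∃ x, x ∈ Nat.Partrec.Code.evaln t c 0 := by
    intro t
    unfold haltT
    rw [Denumerable.ofNat_encode]
    rcases Nat.Partrec.Code.evaln t c 0 with _ | x
    · simp
    · simp
  rw [Part.dom_iff_mem]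
  constructor
  · rintro ⟨t, ht⟩
    obtain ⟨x, hx⟩ := (key t).1 ht
    exact ⟨x, Nat.Partrec.Code.evaln_complete.2 ⟨t, hx⟩⟩
  · rintro ⟨x, hx⟩
    obtain ⟨t, ht⟩ := Nat.Partrec.Code.evaln_complete.1 hx
    exact ⟨t, (key t).2 ⟨x, ht⟩⟩

lemma halting_undecidable :
    ¬ ∃ f : ℕ → Bool, Computable f ∧ ∀ M : TCM, (f (encodeTCM M) = true ↔ M.Halts) := by
  rintro ⟨f, hf, hM⟩
  obtain ⟨P, hP⟩ := exists_machine haltT primrec_haltT (fun n t => by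
    unfold haltT
    cases (Nat.Partrec.Code.evaln t (Denumerable.ofNat Nat.Partrec.Code n) 0).isSome <;> simp)
  have hK : Primrec fun n : ℕ => prm 0 ^ n * prm 2 - 1 :=
    Primrec.nat_sub.comp (Primrec.nat_mul.comp (primrec_pow _) (Primrec.const _)) (Primrec.const 1)
  have hcomp : Computable fun c : Nat.Partrec.Code =>
      f (encodeTCM (MK P (prm 0 ^ (Encodable.encode c) * prm 2 - 1))) :=
    hf.comp (((primrec_encode_MK P).comp (hK.comp Primrec.encode)).to_comp)
  refine ComputablePred.halting_problem 0 (ComputablePred.computable_iff.2 ⟨_, hcomp, ?_⟩)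
  funext c
  rw [hM, hP, haltT_iff]


/-- bts membership is undecidable within the class `C = {R_M}`. -/
theorem stmt_11 :
    ¬ ∃ f : ℕ → Bool, Computable f ∧
      ∀ M : TCM, (f (encodeTCM M) = true ↔ IsBts (RM M)) := by
  rintro ⟨f, hf, hM⟩
  exact halting_undecidable ⟨f, hf, fun M => (hM M).trans (bts_iff_halts M)⟩

end
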